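/- arXiv:1006.5097 — 8 statements merged into one kernel-verified Lean document; each statement's English description precedes it below -/
import Mathlib

section
/- There exists an infinite color sequence x : ℕ → Fin 3 that is balanced but not bounded; hence the converse of the implication 'bounded ⇒ balanced' fails. -/
open Filter Topology

/-- Number of indices `i < n` with `x i = a`. -/
def cnt {k : ℕ} (x : ℕ → Fin k) (a : Fin k) (n : ℕ) : ℕ :=
  ((Finset.range n).filter fun i => x i = a).card

/-- `diff_{a,b}(x^{≤n})`. -/
def diffSeq {k : ℕ} (x : ℕ → Fin k) (a b : Fin k) (n : ℕ) : ℤ :=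
  (cnt x a n : ℤ) - (cnt x b n : ℤ)

/-- Bounded difference property. -/
def BoundedSeq {k : ℕ} (x : ℕ → Fin k) : Prop :=
  ∃ C : ℕ, ∀ (a b : Fin k) (n : ℕ), |diffSeq x a b n| ≤ (C : ℤ)

/-- Color `a` has frequency `r` in `x`. -/
def HasFreq {k : ℕ} (x : ℕ → Fin k) (a : Fin k) (r : ℝ) : Prop :=
  Tendsto (fun n : ℕ => (cnt x a n : ℝ) / (n : ℝ)) atTop (𝓝 r)

/-- Every color has frequency `1/k`. -/
def BalancedSeq {k : ℕ} (x : ℕ → Fin k) : Prop :=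
  ∀ a : Fin k, HasFreq x a (1 / (k : ℝ))

def xs (n : ℕ) : Fin 3 :=
  if n % 3 = 0 then 0 else if n % 3 = 2 then 2 else
    if Nat.sqrt (n / 3 + 1) = Nat.sqrt (n / 3) then 1 else 0

lemma cnt_succ_xs (a : Fin 3) (n : ℕ) :
    cnt xs a (n + 1) = cnt xs a n + if xs n = a then 1 else 0 := by
  unfold cnt
  rw [Finset.range_add_one, Finset.filter_insert]
  split_ifs <;> simp

lemma cnt_block (m : ℕ) : cnt xs 0 (3 * m) = m + Nat.sqrt m ∧
    cnt xs 1 (3 * m) + Nat.sqrt m = m ∧ cnt xs 2 (3 * m) = m := by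
  induction m with
  | zero => simp [cnt]
  | succ m ih =>
    obtain ⟨h0, h1, h2⟩ := ih
    have e0 : xs (3 * m) = 0 := by simp [xs]
    have e2 : xs (3 * m + 2) = 2 := by
      have : (3 * m + 2) % 3 = 2 := by omega
      simp [xs, this]
    have e1 : xs (3 * m + 1) = if Nat.sqrt (m + 1) = Nat.sqrt m then 1 else 0 := by
      have h : (3 * m + 1) % 3 = 1 := by omega
      have h' : (3 * m + 1) / 3 = m := by omega
      simp [xs, h, h']
    have s1 := Nat.sqrt_succ_le_succ_sqrt m
    have s2 : Nat.sqrt m ≤ Nat.sqrt (m + 1) := Nat.sqrt_le_sqrt (by omega)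
    have hm : 3 * (m + 1) = 3 * m + 1 + 1 + 1 := by ring
    simp only [Nat.succ_eq_add_one] at s1
    rw [hm]
    simp only [cnt_succ_xs, e0, e2, e1]
    by_cases h : Nat.sqrt (m + 1) = Nat.sqrt m
    · simp [h]; omega
    · simp [h]; omega

lemma cnt_near (a : Fin 3) (n : ℕ) :
    cnt xs a n ≤ n / 3 + Nat.sqrt n + 2 ∧ n / 3 ≤ cnt xs a n + Nat.sqrt n := by
  obtain ⟨h0, h1, h2⟩ := cnt_block (n / 3)
  have hs : Nat.sqrt (n / 3) ≤ Nat.sqrt n := Nat.sqrt_le_sqrt (by omega)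
  have key : cnt xs a (3 * (n / 3)) ≤ cnt xs a n ∧
      cnt xs a n ≤ cnt xs a (3 * (n / 3)) + 2 := by
    have c1 := cnt_succ_xs a (3 * (n / 3))
    have c2 := cnt_succ_xs a (3 * (n / 3) + 1)
    have : n = 3 * (n / 3) ∨ n = 3 * (n / 3) + 1 ∨ n = 3 * (n / 3) + 1 + 1 := by omega
    generalize 3 * (n / 3) = q at *
    rcases this with h | h | h <;> subst h <;> split_ifs at * <;> omega
  fin_cases a <;> simp at * <;> omega

theorem exists_balanced_not_bounded :
    ∃ x : ℕ → Fin 3, BalancedSeq x ∧ ¬ BoundedSeq x := by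
  refine ⟨xs, ?_, ?_⟩
  · intro a
    unfold HasFreq
    have l1 : Tendsto (fun n : ℕ => (Real.sqrt n)⁻¹) atTop (𝓝 0) :=
      (Real.tendsto_sqrt_atTop.comp tendsto_natCast_atTop_atTop).inv_tendsto_atTop
    have l2 : Tendsto (fun n : ℕ => (3 : ℝ) * (Real.sqrt n)⁻¹) atTop (𝓝 0) := by
      simpa using l1.const_mul 3
    rw [tendsto_iff_dist_tendsto_zero]
    refine squeeze_zero' (Eventually.of_forall fun _ => dist_nonneg) ?_ l2
    filter_upwards [eventually_ge_atTop 1] with n hn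
    obtain ⟨u, v⟩ := cnt_near a n
    have hn' : (1 : ℝ) ≤ n := by exact_mod_cast hn
    have s1 : (1 : ℝ) ≤ Real.sqrt n := Real.one_le_sqrt.mpr hn'
    have s2 : (Nat.sqrt n : ℝ) ≤ Real.sqrt n := Real.nat_sqrt_le_real_sqrt
    have u' : (3 : ℝ) * cnt xs a n ≤ n + 3 * Nat.sqrt n + 6 := by
      exact_mod_cast (by omega : 3 * cnt xs a n ≤ n + 3 * Nat.sqrt n + 6)
    have v' : (n : ℝ) ≤ 3 * cnt xs a n + 3 * Nat.sqrt n + 2 := by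
      exact_mod_cast (by omega : n ≤ 3 * cnt xs a n + 3 * Nat.sqrt n + 2)
    have hsq : Real.sqrt n * Real.sqrt n = n := Real.mul_self_sqrt (by linarith)
    have e : (3 : ℝ) * (Real.sqrt n)⁻¹ = 3 * Real.sqrt n / n := by
      rw [← div_eq_mul_inv, div_eq_div_iff (by linarith) (by linarith)]
      rw [← hsq]; ring_nf; simp
    have e2 : (cnt xs a n : ℝ) / n - 1 / ((3 : ℕ) : ℝ) = (cnt xs a n - n / 3) / n := by
      have : (n : ℝ) ≠ 0 := by linarith
      push_cast; field_simp
    rw [Real.dist_eq, e, e2, abs_div, abs_of_pos (by linarith : (0 : ℝ) < n)]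
    gcongr
    rw [abs_le]; constructor <;> linarith
  · rintro ⟨C, h⟩
    have := h 0 1 (3 * ((C + 1) * (C + 1)))
    obtain ⟨h0, h1, -⟩ := cnt_block ((C + 1) * (C + 1))
    rw [Nat.sqrt_eq] at h0 h1
    unfold diffSeq at this
    have := (abs_le.mp this).2
    omega
end

section
/- Let k ≥ 1 and let y, z : ℕ → Fin k be bounded infinite color sequences. Then every infinite color sequence x that is a shuffle of y and z is bounded. -/
open Filter Topology

/-- `s` is the infinite concatenation of the finite words `w 0, w 1, w 2, …`.
The total length must be infinite, and each word occupies the corresponding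
block of positions of `s`. -/
def IsConcat {k : ℕ} (w : ℕ → List (Fin k)) (s : ℕ → Fin k) : Prop :=
  Tendsto (fun n : ℕ => ∑ i ∈ Finset.range n, (w i).length) atTop atTop ∧
  ∀ (n j : ℕ) (hj : j < (w n).length),
    s ((∑ i ∈ Finset.range n, (w i).length) + j) = (w n).get ⟨j, hj⟩

/-- `x` is a shuffle of `y` and `z`: `x = w₁w₂w₃⋯`, `y` is the concatenation of
the odd-indexed words and `z` of the even-indexed words. -/
def IsShuffle {k : ℕ} (x y z : ℕ → Fin k) : Prop :=
  ∃ w : ℕ → List (Fin k),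
    IsConcat w x ∧ IsConcat (fun n => w (2 * n)) y ∧
      IsConcat (fun n => w (2 * n + 1)) z

theorem cnt_succ_aux {k : ℕ} (x : ℕ → Fin k) (a : Fin k) (n : ℕ) :
    cnt x a (n + 1) = cnt x a n + if x n = a then 1 else 0 := by
  unfold cnt
  rw [Finset.range_add_one, Finset.filter_insert]
  split_ifs <;> simp

theorem cnt_block_aux {k : ℕ} (w : ℕ → List (Fin k)) (s : ℕ → Fin k) (h : IsConcat w s)
    (a : Fin k) (n : ℕ) : ∀ j ≤ (w n).length,
    cnt s a ((∑ i ∈ Finset.range n, (w i).length) + j) =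
      cnt s a (∑ i ∈ Finset.range n, (w i).length) + ((w n).take j).count a := by
  intro j
  induction j with
  | zero => simp
  | succ j ih =>
    intro hj
    have h1 := h.2 n j (by omega)
    rw [← add_assoc, cnt_succ_aux, ih (by omega), h1, List.take_add_one,
      List.getElem?_eq_getElem (by omega), List.count_append]
    simp [List.count_singleton, add_assoc]

theorem cnt_full_aux {k : ℕ} (w : ℕ → List (Fin k)) (s : ℕ → Fin k) (h : IsConcat w s)
    (a : Fin k) (n : ℕ) :
    cnt s a (∑ i ∈ Finset.range n, (w i).length) =
      ∑ i ∈ Finset.range n, (w i).count a := by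
  induction n with
  | zero => simp [cnt]
  | succ n ih =>
    rw [Finset.sum_range_succ, Finset.sum_range_succ, cnt_block_aux w s h a n _ le_rfl, ih,
      List.take_length]

theorem exists_block_aux (f : ℕ → ℕ) (m n : ℕ) (h : m ≤ ∑ i ∈ Finset.range n, f i) :
    ∃ p j, j ≤ f p ∧ m = (∑ i ∈ Finset.range p, f i) + j := by
  induction n with
  | zero => exact ⟨0, 0, by simp, by simpa using h⟩
  | succ n ih =>
    by_cases h' : m ≤ ∑ i ∈ Finset.range n, f i
    · exact ih h'
    · rw [Finset.sum_range_succ] at h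
      exact ⟨n, m - ∑ i ∈ Finset.range n, f i, by omega, by omega⟩

theorem sum_even_odd_aux (f : ℕ → ℕ) (p : ℕ) : ∑ i ∈ Finset.range (2 * p), f i =
    ∑ i ∈ Finset.range p, f (2 * i) + ∑ i ∈ Finset.range p, f (2 * i + 1) := by
  induction p with
  | zero => simp
  | succ p ih =>
    rw [show 2 * (p + 1) = 2 * p + 1 + 1 by ring]
    simp only [Finset.sum_range_succ, ih]
    ring

theorem shuffle_cnt_aux {k : ℕ} (x y z : ℕ → Fin k) (hx : IsShuffle x y z) (m : ℕ) :
    ∃ p q, ∀ a, cnt x a m = cnt y a p + cnt z a q := by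
  obtain ⟨w, hw, hwy, hwz⟩ := hx
  obtain ⟨N, hN⟩ := (hw.1.eventually_ge_atTop m).exists
  obtain ⟨n, j, hj, rfl⟩ := exists_block_aux _ _ _ hN
  obtain ⟨p, rfl | rfl⟩ := Nat.even_or_odd' n
  · refine ⟨(∑ i ∈ Finset.range p, (w (2 * i)).length) + j,
      ∑ i ∈ Finset.range p, (w (2 * i + 1)).length, fun a => ?_⟩
    have e1 := cnt_block_aux w x hw a _ j hj
    have e2 := cnt_full_aux w x hw a (2 * p)
    have e3 := cnt_block_aux _ y hwy a p j hj
    have e4 := cnt_full_aux _ y hwy a p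
    have e5 := cnt_full_aux _ z hwz a p
    have e6 := sum_even_odd_aux (fun i => (w i).count a) p
    omega
  · refine ⟨∑ i ∈ Finset.range (p + 1), (w (2 * i)).length,
      (∑ i ∈ Finset.range p, (w (2 * i + 1)).length) + j, fun a => ?_⟩
    have e1 := cnt_block_aux w x hw a _ j hj
    have e2 := cnt_full_aux w x hw a (2 * p + 1)
    have e3 := cnt_block_aux _ z hwz a p j hj
    have e4 := cnt_full_aux _ y hwy a (p + 1)
    have e5 := cnt_full_aux _ z hwz a p
    have e6 := sum_even_odd_aux (fun i => (w i).count a) p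
    have e7 := Finset.sum_range_succ (fun i => (w i).count a) (2 * p)
    have e8 := Finset.sum_range_succ (fun i => (w (2 * i)).count a) p
    omega

theorem shuffle_of_bounded_is_bounded {k : ℕ} (hk : 1 ≤ k)
    (y z : ℕ → Fin k) (hy : BoundedSeq y) (hz : BoundedSeq z)
    (x : ℕ → Fin k) (hx : IsShuffle x y z) : BoundedSeq x := by
  obtain ⟨C, hC⟩ := hy
  obtain ⟨D, hD⟩ := hz
  refine ⟨C + D, fun a b n => ?_⟩
  obtain ⟨p, q, h⟩ := shuffle_cnt_aux x y z hx n
  have h1 := hC a b p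
  have h2 := hD a b q
  have ha := h a
  have hb := h b
  unfold diffSeq at *
  rw [abs_le] at *
  push_cast
  omega
end

section
/- Let G = (A, W) be a k-colored game such that the goal W ⊆ (Fin k)^ω is prefix-independent and convex. Then the game is determined: player 0 or player 1 has a winning strategy. Moreover, if player 1 has a winning strategy, then player 1 has a memoryless winning strategy. -/
open Filter Topology

/-- The word `z` prepended to the infinite sequence `x`. -/
def prepend {k : ℕ} (z : List (Fin k)) (x : ℕ → Fin k) : ℕ → Fin k := fun n =>
  if h : n < z.length then z.get ⟨n, h⟩ else x (n - z.length)

/-- A goal is prefix-independent if membership is invariant under prepending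
any finite word. -/
def PrefixIndep {k : ℕ} (W : Set (ℕ → Fin k)) : Prop :=
  ∀ (z : List (Fin k)) (x : ℕ → Fin k), x ∈ W ↔ prepend z x ∈ W

/-- A goal is convex if it is closed under shuffles. -/
def ConvexGoal {k : ℕ} (W : Set (ℕ → Fin k)) : Prop :=
  ∀ y z : ℕ → Fin k, y ∈ W → z ∈ W → ∀ x : ℕ → Fin k, IsShuffle x y z → x ∈ W

/-- A `k`-colored arena on node type `V`: a partition of the nodes given by the
predicate `isV1` (player 1's nodes; player 0 owns the rest), an initial node
and a serial set of colored edges `(source, color, target)`. -/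
structure Arena (V : Type) (k : ℕ) where
  isV1 : V → Prop
  vini : V
  E : Set (V × Fin k × V)
  serial : ∀ v : V, ∃ e ∈ E, e.1 = v

namespace Arena

variable {V : Type} {k : ℕ}

/-- The last node of a finite history (the target of its last edge), `vini`
for the empty history. -/
def lastNode (A : Arena V k) (l : List (V × Fin k × V)) : V :=
  (l.getLast?.map fun e => e.2.2).getD A.vini

/-- A valid finite history: a finite path from `vini` along edges of the arena. -/
def IsHistory (A : Arena V k) (l : List (V × Fin k × V)) : Prop :=
  (∀ e ∈ l, e ∈ A.E) ∧ List.Chain' (fun e f => e.2.2 = f.1) l ∧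
    ∀ e, l.head? = some e → e.1 = A.vini

/-- `σ` is a strategy for the player owning the nodes satisfying `inP`:
on every valid history ending in a node of that player (including the empty
history when `vini` is such a node) it returns an edge of the arena extending
the history. -/
def IsStrategy (A : Arena V k) (inP : V → Prop)
    (σ : List (V × Fin k × V) → V × Fin k × V) : Prop :=
  ∀ l, A.IsHistory l → inP (A.lastNode l) → σ l ∈ A.E ∧ (σ l).1 = A.lastNode l

/-- An infinite play: an infinite path along edges of the arena starting at `vini`. -/
def IsPlay (A : Arena V k) (p : ℕ → V × Fin k × V) : Prop :=
  (p 0).1 = A.vini ∧ ∀ i : ℕ, p i ∈ A.E ∧ (p i).2.2 = (p (i + 1)).1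

/-- The play `p` is consistent with the strategy `σ` of the player owning the
nodes satisfying `inP`. -/
def Consistent (A : Arena V k) (inP : V → Prop)
    (σ : List (V × Fin k × V) → V × Fin k × V) (p : ℕ → V × Fin k × V) : Prop :=
  (inP A.vini → p 0 = σ []) ∧
    ∀ i : ℕ, inP ((p i).2.2) → p (i + 1) = σ (List.ofFn fun j : Fin (i + 1) => p j)

/-- The color sequence of a play. -/
def colorSeq (p : ℕ → V × Fin k × V) : ℕ → Fin k := fun i => (p i).2.1

/-- Player 0's nodes. -/
def isV0 (A : Arena V k) : V → Prop := fun v => ¬ A.isV1 v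

/-- `σ` is a winning strategy for player 0 w.r.t. the goal `W`. -/
def WinningFor0 (A : Arena V k) (W : Set (ℕ → Fin k))
    (σ : List (V × Fin k × V) → V × Fin k × V) : Prop :=
  A.IsStrategy A.isV0 σ ∧
    ∀ p : ℕ → V × Fin k × V, A.IsPlay p → A.Consistent A.isV0 σ p → colorSeq p ∈ W

/-- `σ` is a winning strategy for player 1 w.r.t. the goal `W`. -/
def WinningFor1 (A : Arena V k) (W : Set (ℕ → Fin k))
    (σ : List (V × Fin k × V) → V × Fin k × V) : Prop :=
  A.IsStrategy A.isV1 σ ∧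
    ∀ p : ℕ → V × Fin k × V, A.IsPlay p → A.Consistent A.isV1 σ p → colorSeq p ∉ W

/-- A strategy is memoryless if its value on a (valid) history only depends on
the last node of the history. -/
def Memoryless (A : Arena V k) (σ : List (V × Fin k × V) → V × Fin k × V) : Prop :=
  ∀ l l', A.IsHistory l → A.IsHistory l' → A.lastNode l = A.lastNode l' → σ l = σ l'

end Arena

namespace PIC

variable {V : Type} {k : ℕ}

def Path (E : Set (V × Fin k × V)) (u : V) (p : ℕ → V × Fin k × V) : Prop :=
  (p 0).1 = u ∧ ∀ i : ℕ, p i ∈ E ∧ (p i).2.2 = (p (i + 1)).1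

/-- Strategies with an abstract memory type. -/
def WinsWith (P : V → Prop) (E : Set (V × Fin k × V)) (G : Set (ℕ → Fin k)) (S : Type)
    (upd : S → V × Fin k × V → S) (ch : S → V → V × Fin k × V) (s0 : S) (u : V) : Prop :=
  (∀ s v, P v → ch s v ∈ E ∧ (ch s v).1 = v) ∧
  ∀ (p : ℕ → V × Fin k × V) (s : ℕ → S), Path E u p → s 0 = s0 →
    (∀ n, s (n + 1) = upd (s n) (p n)) → (∀ n, P (p n).1 → p n = ch (s n) (p n).1) →
    Arena.colorSeq p ∈ G

def Wins (P : V → Prop) (E : Set (V × Fin k × V)) (G : Set (ℕ → Fin k)) (u : V) : Prop :=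
  ∃ (S : Type) (upd : S → V × Fin k × V → S) (ch : S → V → V × Fin k × V) (s0 : S),
    WinsWith P E G S upd ch s0 u

def MWins (P : V → Prop) (E : Set (V × Fin k × V)) (G : Set (ℕ → Fin k)) (u : V) : Prop :=
  ∃ (ch : Unit → V → V × Fin k × V), WinsWith P E G Unit (fun _ _ => ()) ch () u

/-- Both players cannot win. -/
lemma disjoint_wins {P : V → Prop} {E : Set (V × Fin k × V)} {G : Set (ℕ → Fin k)} {u : V}
    (h0 : Wins (fun v => ¬ P v) E G u) (h1 : Wins P E Gᶜ u) : False := by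
  classical
  obtain ⟨S, upd, ch, s0, hv, hw⟩ := h0
  obtain ⟨T, upd', ch', t0, hv', hw'⟩ := h1
  let edge : V × S × T → V × Fin k × V := fun x => if P x.1 then ch' x.2.2 x.1 else ch x.2.1 x.1
  let nxt : V × S × T → V × S × T := fun x =>
    ((edge x).2.2, upd x.2.1 (edge x), upd' x.2.2 (edge x))
  let r : ℕ → V × S × T := fun n => Nat.rec (u, s0, t0) (fun _ x => nxt x) n
  have r0 : r 0 = (u, s0, t0) := rfl
  have rs : ∀ n, r (n+1) = nxt (r n) := fun n => rfl
  have hed : ∀ x, edge x ∈ E ∧ (edge x).1 = x.1 := by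
    intro x
    by_cases hx : P x.1
    · simp only [edge, if_pos hx]; exact hv' _ _ hx
    · simp only [edge, if_neg hx]; exact hv _ _ hx
  have hpath : Path E u (fun n => edge (r n)) := by
    refine ⟨(hed _).2, fun i => ⟨(hed _).1, ?_⟩⟩
    try simp only
    rw [(hed (r (i+1))).2]
  have a := hw (fun n => edge (r n)) (fun n => (r n).2.1) hpath rfl (fun n => rfl) (by
    intro n hn
    simp only [(hed (r n)).2] at hn ⊢
    simp only [edge, if_neg hn])
  have b := hw' (fun n => edge (r n)) (fun n => (r n).2.2) hpath rfl (fun n => rfl) (by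
    intro n hn
    simp only [(hed (r n)).2] at hn ⊢
    simp only [edge, if_pos hn])
  exact b a

lemma tail_iff {W : Set (ℕ → Fin k)} (hpi : PrefixIndep W) (x : ℕ → Fin k) (n : ℕ) :
    (fun j => x (n + j)) ∈ W ↔ x ∈ W := by
  rw [hpi (List.ofFn (fun j : Fin n => x j)) (fun j => x (n + j))]
  have : prepend (List.ofFn (fun j : Fin n => x j)) (fun j => x (n + j)) = x := by
    funext i
    unfold prepend
    split_ifs with h
    · simp
    · simp only [List.length_ofFn] at h ⊢
      congr 1; omega
  rw [this]

/-- The residual of a winning strategy is winning. -/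
lemma residual {P : V → Prop} {E : Set (V × Fin k × V)} {W : Set (ℕ → Fin k)}
    (hpi : PrefixIndep W) {S : Type}
    {upd : S → V × Fin k × V → S} {ch : S → V → V × Fin k × V} {s0 : S} {u : V}
    (h : WinsWith P E W S upd ch s0 u) (p : ℕ → V × Fin k × V) (s : ℕ → S)
    (n : ℕ) (hp0 : (p 0).1 = u) (hpE : ∀ i < n, p i ∈ E)
    (hpc : ∀ i < n, (p i).2.2 = (p (i + 1)).1)
    (hs0 : s 0 = s0) (hs : ∀ n, s (n + 1) = upd (s n) (p n))
    (hc : ∀ n, P (p n).1 → p n = ch (s n) (p n).1) :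
    WinsWith P E W S upd ch (s n) (p n).1 := by
  refine ⟨h.1, ?_⟩
  intro q t hq ht0 ht hqc
  let r : ℕ → V × Fin k × V := fun i => if i < n then p i else q (i - n)
  let a : ℕ → S := fun i => if i < n then s i else t (i - n)
  have h1 : Path E u r := by
    constructor
    · by_cases hn : 0 < n
      · simp only [r, if_pos hn]; exact hp0
      · have : n = 0 := by omega
        subst this
        simp [r, hq.1, hp0]
    · intro i
      by_cases hi : i < n
      · by_cases hi' : i + 1 < n
        · simp only [r, if_pos hi, if_pos hi']; exact ⟨hpE i hi, hpc i hi⟩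
        · have : i + 1 = n := by omega
          simp only [r, if_pos hi, if_neg hi']
          refine ⟨hpE i hi, ?_⟩
          rw [hpc i hi, this]; simp [hq.1]
      · have hi' : ¬ i + 1 < n := by omega
        simp only [r, if_neg hi, if_neg hi']
        rw [show i + 1 - n = (i - n) + 1 by omega]
        exact hq.2 _
  have h2 : a 0 = s0 := by
    by_cases hn : 0 < n
    · simp only [a, if_pos hn]; exact hs0
    · have : n = 0 := by omega
      subst this
      simp [a, ht0, hs0]
  have h3 : ∀ i, a (i + 1) = upd (a i) (r i) := by
    intro i
    by_cases hi : i < n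
    · by_cases hi' : i + 1 < n
      · simp only [r, a, if_pos hi, if_pos hi']; exact hs i
      · have : i + 1 = n := by omega
        simp only [r, a, if_pos hi, if_neg hi']
        rw [← hs i, this]; simp [ht0]
    · have hi' : ¬ i + 1 < n := by omega
      simp only [r, a, if_neg hi, if_neg hi']
      rw [show i + 1 - n = (i - n) + 1 by omega]
      exact ht _
  have h4 : ∀ i, P (r i).1 → r i = ch (a i) (r i).1 := by
    intro i
    by_cases hi : i < n
    · simp only [r, a, if_pos hi]; exact hc i
    · simp only [r, a, if_neg hi]; exact hqc _
  have := h.2 r a h1 h2 h3 h4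
  rw [← tail_iff hpi _ n] at this
  convert this using 1
  funext j
  simp [Arena.colorSeq, r]

lemma const_between {α : Type} (f : ℕ → α) (M : ℕ → Prop) (hf : ∀ n, ¬ M n → f (n+1) = f n)
    (a b : ℕ) (hab : a ≤ b) (h : ∀ i, a ≤ i → i < b → ¬ M i) : f b = f a := by
  induction b, hab using Nat.le_induction with
  | base => rfl
  | succ b hb ih =>
    rw [hf b (h b hb (by omega))]
    exact ih fun i h1 h2 => h i h1 (by omega)

lemma const_nth {α : Type} (f : ℕ → α) (M : ℕ → Prop) (hM : (Set.ofPred M).Infinite)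
    (hf : ∀ n, ¬ M n → f (n+1) = f n) :
    f (Nat.nth M 0) = f 0 ∧ ∀ j, f (Nat.nth M (j+1)) = f (Nat.nth M j + 1) := by
  classical
  constructor
  · apply const_between f M hf 0 _ (Nat.zero_le _)
    intro i _ hi hMi
    have := Nat.lt_nth_iff_count_lt (p := M) hM (a := i) (b := 0)
    rw [Nat.nth_zero] at hi
    exact absurd (Nat.sInf_le (s := Set.ofPred M) hMi) (by omega)
  · intro j
    have hlt : Nat.nth M j < Nat.nth M (j+1) := Nat.nth_strictMono hM (by omega)
    apply const_between f M hf _ _ hlt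
    intro i h1 h2 hMi
    have h3 : Nat.nth M (Nat.count M i) = i := Nat.nth_count hMi
    rw [← h3] at h2
    have h1' : Nat.nth M j < i := h1
    rw [← h3] at h1'
    have := (Nat.nth_strictMono hM).lt_iff_lt.1 h2
    have := (Nat.nth_strictMono hM).lt_iff_lt.1 h1'
    omega

lemma proj_wins {P : V → Prop} {E : Set (V × Fin k × V)} {W : Set (ℕ → Fin k)}
    {S : Type} {upd : S → V × Fin k × V → S} {ch : S → V → V × Fin k × V} {s0 : S} {u : V}
    (h : WinsWith P E W S upd ch s0 u) (p : ℕ → V × Fin k × V) (M : ℕ → Prop)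
    (hM : (Set.ofPred M).Infinite) (pos : ℕ → V) (st : ℕ → S)
    (pos0 : pos 0 = u) (posN : ∀ n, ¬ M n → pos (n+1) = pos n)
    (posM : ∀ n, M n → pos (n+1) = (p n).2.2)
    (hpos : ∀ n, M n → (p n).1 = pos n) (hE : ∀ n, M n → p n ∈ E)
    (st0 : st 0 = s0) (stN : ∀ n, ¬ M n → st (n+1) = st n)
    (stM : ∀ n, M n → st (n+1) = upd (st n) (p n))
    (hc : ∀ n, M n → P (p n).1 → p n = ch (st n) (p n).1) :
    (fun j => Arena.colorSeq p (Nat.nth M j)) ∈ W := by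
  have hm : ∀ j, M (Nat.nth M j) := fun j => Nat.nth_mem_of_infinite hM j
  obtain ⟨a0, a1⟩ := const_nth pos M hM posN
  obtain ⟨b0, b1⟩ := const_nth st M hM stN
  refine h.2 (fun j => p (Nat.nth M j)) (fun j => st (Nat.nth M j)) ⟨?_, ?_⟩ ?_ ?_ ?_
  · (try simp only); rw [hpos _ (hm 0), a0, pos0]
  · intro i
    refine ⟨hE _ (hm i), ?_⟩
    try simp only
    rw [hpos _ (hm (i+1)), a1, posM _ (hm i)]
  · (try simp only); rw [b0, st0]
  · intro n; (try simp only); rw [b1, stM _ (hm n)]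
  · intro n; exact hc _ (hm n)

lemma one_side {W : Set (ℕ → Fin k)} (hpi : PrefixIndep W) (x : ℕ → Fin k) (M : ℕ → Prop)
    (hN : ¬ (Set.ofPred fun n => ¬ M n).Infinite)
    (h1 : (Set.ofPred M).Infinite → (fun j => x (Nat.nth M j)) ∈ W) : x ∈ W := by
  classical
  rw [Set.not_infinite] at hN
  obtain ⟨N, hN⟩ := hN.bddAbove
  have hN' : ∀ i, N < i → M i := by
    intro i hi
    by_contra hc
    exact absurd (hN hc) (by omega)
  have hinf : (Set.ofPred M).Infinite := by
    apply Set.infinite_of_not_bddAbove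
    rintro ⟨B, hB⟩
    have := hB (hN' (N + B + 1) (by omega))
    omega
  have h := h1 hinf
  rw [← tail_iff hpi _ (Nat.count M (N+1))] at h
  rw [← tail_iff hpi _ (N+1)]
  convert h using 1
  funext j
  try simp only
  have : Nat.count M (N+1+j) = Nat.count M (N+1) + j := by
    induction j with
    | zero => rfl
    | succ j ih => rw [← add_assoc, Nat.count_succ, ih, if_pos (hN' _ (by omega))]; omega
  rw [← this, Nat.nth_count (hN' _ (by omega))]

lemma concat_nth (x : ℕ → Fin k) (M : ℕ → Prop) [DecidablePred M] (hM : (Set.ofPred M).Infinite) :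
    IsConcat (fun n => if M n then [x n] else []) (fun j => x (Nat.nth M j)) := by
  have hsum : ∀ n, ∑ i ∈ Finset.range n, ((fun n => if M n then [x n] else []) i).length
      = Nat.count M n := by
    intro n
    induction n with
    | zero => simp
    | succ n ih =>
      rw [Finset.sum_range_succ, ih, Nat.count_succ]
      by_cases h : M n <;> simp [h]
  constructor
  · simp only [hsum]
    refine tendsto_atTop_atTop_of_monotone (Nat.count_monotone M) fun b => ⟨Nat.nth M b, ?_⟩
    rw [Nat.count_nth_of_infinite hM]
  · intro n j hj
    rw [hsum]
    by_cases h : M n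
    · simp only [h, if_true, List.length_singleton] at hj
      obtain rfl : j = 0 := by omega
      simp [h, Nat.nth_count h]
    · simp [h] at hj

lemma shuffle_mem {W : Set (ℕ → Fin k)} (hpi : PrefixIndep W) (hcv : ConvexGoal W)
    (x : ℕ → Fin k) (M : ℕ → Prop)
    (h1 : (Set.ofPred M).Infinite → (fun j => x (Nat.nth M j)) ∈ W)
    (h2 : (Set.ofPred fun n => ¬ M n).Infinite → (fun j => x (Nat.nth (fun n => ¬ M n) j)) ∈ W) :
    x ∈ W := by
  classical
  by_cases hM : (Set.ofPred M).Infinite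
  swap
  · exact one_side hpi x (fun n => ¬ M n) (by simpa using hM) h2
  by_cases hN : (Set.ofPred fun n => ¬ M n).Infinite
  swap
  · exact one_side hpi x M hN h1
  refine hcv _ _ (h1 hM) (h2 hN) x
    ⟨fun i => if i % 2 = 0 then (if M (i/2) then [x (i/2)] else [])
      else (if ¬ M (i/2) then [x (i/2)] else []), ?_, ?_, ?_⟩
  · set w : ℕ → List (Fin k) := fun i => if i % 2 = 0 then (if M (i/2) then [x (i/2)] else [])
      else (if ¬ M (i/2) then [x (i/2)] else []) with hw
    have we : ∀ n, w (2*n) = if M n then [x n] else [] := by intro n; simp [hw]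
    have wo : ∀ n, w (2*n+1) = if M n then [] else [x n] := by
      intro n
      have e1 : (2*n+1) % 2 = 1 := by omega
      have e2 : (2*n+1) / 2 = n := by omega
      simp [hw, e1, e2]
    have hs : ∀ n, ∑ i ∈ Finset.range (2*n), (w i).length = n := by
      intro n
      induction n with
      | zero => simp
      | succ n ih =>
        rw [show 2 * (n+1) = 2*n+1+1 by ring, Finset.sum_range_succ, Finset.sum_range_succ, ih,
          we, wo]
        by_cases h : M n <;> simp [h]
    constructor
    · refine tendsto_atTop_atTop_of_monotone ?_ fun b => ⟨2 * b, (hs b).ge⟩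
      intro a b hab
      exact Finset.sum_le_sum_of_subset (Finset.range_mono hab)
    · intro n j hj
      obtain ⟨m, rfl | rfl⟩ : ∃ m, n = 2 * m ∨ n = 2 * m + 1 := ⟨n/2, by omega⟩
      · have hj' := hj
        rw [we] at hj'
        by_cases h : M m
        · simp only [h, if_true, List.length_singleton] at hj'
          obtain rfl : j = 0 := by omega
          rw [hs]
          simp [we, h]
        · simp [h] at hj'
      · have hj' := hj
        rw [wo] at hj'
        by_cases h : M m
        · simp [h] at hj'
        · simp only [h, if_false, List.length_singleton] at hj'
          obtain rfl : j = 0 := by omega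
          rw [Finset.sum_range_succ, hs]
          simp [we, wo, h]
  · convert concat_nth x M hM using 2 with n
    simp
  · convert concat_nth x (fun n => ¬ M n) hN using 2 with n
    have e1 : (2*n+1) % 2 = 1 := by omega
    have e2 : (2*n+1) / 2 = n := by omega
    simp [e1, e2]

/-- Combination of two strategies, splitting at `v`. -/
lemma combine {P : V → Prop} {W : Set (ℕ → Fin k)} (hpi : PrefixIndep W) (hcv : ConvexGoal W)
    {E E1 E2 : Set (V × Fin k × V)} {v u : V} (hPv : ¬ P v)
    (s1 : E1 ⊆ E) (s2 : E2 ⊆ E) (hc1 : ∀ e ∈ E, e.1 ≠ v → e ∈ E1)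
    (hc2 : ∀ e ∈ E, e.1 ≠ v → e ∈ E2) (hc : ∀ e ∈ E, e ∉ E1 → e ∈ E2)
    (h1 : Wins P E1 W u) (h2 : Wins P E2 W v) : Wins P E W u := by
  classical
  obtain ⟨S, upd, ch, a0, w1⟩ := h1
  obtain ⟨T, upd', ch', b0, w2⟩ := h2
  let nm : Bool → V × Fin k × V → Bool := fun m e => if e.1 = v then decide (e ∈ E1) else m
  refine ⟨S × T × Bool, fun s e => (if nm s.2.2 e then upd s.1 e else s.1,
    if nm s.2.2 e then s.2.1 else upd' s.2.1 e, nm s.2.2 e),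
    fun s x => if s.2.2 then ch s.1 x else ch' s.2.1 x, (a0, b0, true), ?_, ?_⟩
  · intro s x hx
    by_cases hs : s.2.2 = true
    · simp only [if_pos hs]; exact ⟨s1 (w1.1 _ _ hx).1, (w1.1 _ _ hx).2⟩
    · simp only [if_neg hs]; exact ⟨s2 (w2.1 _ _ hx).1, (w2.1 _ _ hx).2⟩
  intro p s hp hs0 hs hcons
  let M : ℕ → Prop := fun n => nm (s n).2.2 (p n) = true
  have hm : ∀ n, (s (n+1)).2.2 = nm (s n).2.2 (p n) := fun n => by rw [hs]
  let pos1 : ℕ → V := fun n => Nat.rec u (fun n x => if M n then (p n).2.2 else x) n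
  let pos2 : ℕ → V := fun n => Nat.rec v (fun n x => if M n then x else (p n).2.2) n
  have p1 : ∀ n, pos1 (n+1) = if M n then (p n).2.2 else pos1 n := fun n => rfl
  have p2 : ∀ n, pos2 (n+1) = if M n then pos2 n else (p n).2.2 := fun n => rfl
  have inv : ∀ n, ((s n).2.2 = true → pos1 n = (p n).1 ∧ pos2 n = v) ∧
      (¬ (s n).2.2 = true → pos2 n = (p n).1 ∧ pos1 n = v) := by
    intro n
    induction n with
    | zero => 
      rw [hs0]
      exact ⟨fun _ => ⟨hp.1.symm, rfl⟩, fun h => absurd rfl h⟩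
    | succ n ih =>
      rw [hm, p1, p2, ← (hp.2 n).2]
      change (M n → _) ∧ (¬ M n → _)
      have key : (M n → pos2 n = v) ∧ (¬ M n → pos1 n = v) := by
        by_cases hv : (p n).1 = v
        · rw [hv] at ih
          by_cases hb : (s n).2.2 = true
          · exact ⟨fun _ => (ih.1 hb).2, fun _ => (ih.1 hb).1⟩
          · exact ⟨fun _ => (ih.2 hb).1, fun _ => (ih.2 hb).2⟩
        · have : M n ↔ (s n).2.2 = true := by simp only [M, nm, if_neg hv]
          rw [this]
          exact ⟨fun h => (ih.1 h).2, fun h => (ih.2 h).2⟩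
      exact ⟨fun h => by simp only [if_pos h]; exact ⟨trivial, key.1 h⟩,
        fun h => by simp only [if_neg h]; exact ⟨trivial, key.2 h⟩⟩
  have key : ∀ n, (M n → (p n).1 = pos1 n) ∧ (¬ M n → (p n).1 = pos2 n) := by
    intro n
    have ih := inv n
    by_cases hv : (p n).1 = v
    · rw [hv] at ih ⊢
      by_cases hb : (s n).2.2 = true
      · exact ⟨fun _ => (ih.1 hb).1.symm, fun _ => (ih.1 hb).2.symm⟩
      · exact ⟨fun _ => (ih.2 hb).2.symm, fun _ => (ih.2 hb).1.symm⟩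
    · have : M n ↔ (s n).2.2 = true := by simp only [M, nm, if_neg hv]
      rw [this]
      exact ⟨fun h => (ih.1 h).1.symm, fun h => (ih.2 h).1.symm⟩
  have hPM : ∀ n, P (p n).1 → (M n ↔ (s n).2.2 = true) := by
    intro n hn
    have hv : (p n).1 ≠ v := fun h => hPv (h ▸ hn)
    simp only [M, nm, if_neg hv]
  apply shuffle_mem hpi hcv _ M
  · intro hM
    refine proj_wins w1 p M hM pos1 (fun n => (s n).1) rfl ?_ ?_ (fun n => (key n).1) ?_ ?_ ?_ ?_ ?_
    · intro n hn; rw [p1, if_neg hn]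
    · intro n hn; rw [p1, if_pos hn]
    · intro n hn
      by_cases hv : (p n).1 = v
      · simpa only [M, nm, if_pos hv, decide_eq_true_eq] using hn
      · exact hc1 _ (hp.2 n).1 hv
    · simp only [hs0]
    · intro n hn; simp only [hs n]; exact if_neg hn
    · intro n hn; simp only [hs n]; exact if_pos hn
    · intro n hn hP
      have := hcons n hP
      exact this.trans (if_pos ((hPM n hP).1 hn))
  · intro hM
    refine proj_wins w2 p (fun n => ¬ M n) hM pos2 (fun n => (s n).2.1) rfl ?_ ?_
      (fun n => (key n).2) ?_ ?_ ?_ ?_ ?_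
    · intro n hn; rw [p2, if_pos (not_not.1 hn)]
    · intro n hn; rw [p2, if_neg hn]
    · intro n hn
      by_cases hv : (p n).1 = v
      · refine hc _ (hp.2 n).1 ?_
        simpa only [M, nm, if_pos hv, decide_eq_true_eq] using hn
      · exact hc2 _ (hp.2 n).1 hv
    · simp only [hs0]
    · intro n hn; simp only [hs n]; exact if_pos (not_not.1 hn)
    · intro n hn; simp only [hs n]; exact if_neg hn
    · intro n hn hP
      have := hcons n hP
      exact this.trans (if_neg (fun h => hn ((hPM n hP).2 h)))

lemma memoryless_lift {P : V → Prop} {G : Set (ℕ → Fin k)}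
    {E E1 : Set (V × Fin k × V)} {v u : V} (hPv : P v)
    (s1 : E1 ⊆ E) (hc1 : ∀ e ∈ E, e.1 ≠ v → e ∈ E1)
    (h : MWins P E1 G u) : MWins P E G u := by
  obtain ⟨ch, hv, hw⟩ := h
  refine ⟨ch, fun s x hx => ⟨s1 (hv s x hx).1, (hv s x hx).2⟩, ?_⟩
  intro p s hp h0 hs hc
  refine hw p s ⟨hp.1, fun i => ⟨?_, (hp.2 i).2⟩⟩ h0 hs hc
  by_cases hi : (p i).1 = v
  · have hP : P (p i).1 := hi ▸ hPv
    rw [hc i hP]; exact (hv _ _ hP).1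
  · exact hc1 _ (hp.2 i).1 hi

lemma avoid_lift {P : V → Prop} {W : Set (ℕ → Fin k)} (hpi : PrefixIndep W)
    {E E1 : Set (V × Fin k × V)} {v u : V}
    (s1 : E1 ⊆ E) (hc1 : ∀ e ∈ E, e.1 ≠ v → e ∈ E1)
    (h : Wins (fun x => ¬ P x) E1 W u) (hv : Wins P E1 Wᶜ v) :
    Wins (fun x => ¬ P x) E W u := by
  classical
  obtain ⟨S, upd, ch, s0, w⟩ := h
  refine ⟨S, upd, ch, s0, fun s x hx => ⟨s1 (w.1 s x hx).1, (w.1 s x hx).2⟩, ?_⟩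
  intro p s hp h0 hs hc
  have hne : ∀ n, (p n).1 ≠ v := by
    intro n
    induction n using Nat.strong_induction_on with
    | _ n ih =>
      intro hn
      have := residual hpi w p s n hp.1 (fun i hi => hc1 _ (hp.2 i).1 (ih i hi))
        (fun i _ => (hp.2 i).2) h0 hs hc
      rw [hn] at this
      exact disjoint_wins ⟨S, upd, ch, s n, this⟩ hv
  exact w.2 p s ⟨hp.1, fun i => ⟨hc1 _ (hp.2 i).1 (hne i), (hp.2 i).2⟩⟩ h0 hs hc

lemma MWins.wins {P : V → Prop} {G : Set (ℕ → Fin k)}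
    {E : Set (V × Fin k × V)} {u : V} (h : MWins P E G u) : Wins P E G u := by
  obtain ⟨ch, h⟩ := h
  exact ⟨_, _, ch, _, h⟩

lemma main [Finite V] (P : V → Prop) {W : Set (ℕ → Fin k)} (hpi : PrefixIndep W)
    (hcv : ConvexGoal W) (N : ℕ) : ∀ (E : Set (V × Fin k × V)), E.ncard = N →
      (∀ v, ∃ e ∈ E, e.1 = v) → ∀ u, Wins (fun x => ¬ P x) E W u ∨ MWins P E Wᶜ u := by
  classical
  induction N using Nat.strong_induction_on with
  | _ N IH =>
  intro E hN hser u
  choose d hdE hd using hser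
  by_cases hbase : ∀ e1 ∈ E, ∀ e2 ∈ E, P e1.1 → e1.1 = e2.1 → e1 = e2
  · by_cases hex : ∃ p, Path E u p ∧ Arena.colorSeq p ∈ W
    · left
      obtain ⟨p, hp, hpW⟩ := hex
      refine ⟨ℕ, fun n _ => n + 1, fun n x => if (p n).1 = x then p n else d x, 0, ?_, ?_⟩
      · intro n x _
        by_cases h : (p n).1 = x
        · simp only [if_pos h]; exact ⟨(hp.2 n).1, h⟩
        · simp only [if_neg h]; exact ⟨hdE x, hd x⟩
      · intro q s hq h0 hs hc
        have hsn : ∀ n, s n = n := by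
          intro n
          induction n with
          | zero => exact h0
          | succ n ih => rw [hs, ih]
        have step : ∀ n, (q n).1 = (p n).1 → q n = p n := by
          intro n hn
          by_cases hP : P (q n).1
          · exact hbase _ (hq.2 n).1 _ (hp.2 n).1 hP hn
          · have := hc n hP
            rw [hsn] at this
            exact this.trans (if_pos hn.symm)
        have : ∀ n, q n = p n := by
          intro n
          induction n with
          | zero => exact step 0 (hq.1.trans hp.1.symm)
          | succ n ih =>
            apply step
            rw [← (hq.2 n).2, ← (hp.2 n).2, ih]
        rw [funext this]; exact hpW
    · right
      refine ⟨fun _ => d, fun _ x _ => ⟨hdE x, hd x⟩, ?_⟩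
      intro p s hp _ _ _ hW
      exact hex ⟨p, hp, hW⟩
  · push Not at hbase
    obtain ⟨e1, he1, e2, he2, hP, hv, hne⟩ := hbase
    generalize hvv : e1.1 = v at hP hv
    have hEf : E.Finite := Set.toFinite _
    let E1 : Set (V × Fin k × V) := {e ∈ E | e ≠ e2}
    let E2 : Set (V × Fin k × V) := {e ∈ E | e.1 = v → e = e2}
    have s1 : E1 ⊆ E := fun e he => he.1
    have s2 : E2 ⊆ E := fun e he => he.1
    have c1 : ∀ e ∈ E, e.1 ≠ v → e ∈ E1 := fun e he h => ⟨he, fun h' => h (by rw [h', ← hv])⟩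
    have c2 : ∀ e ∈ E, e.1 ≠ v → e ∈ E2 := fun e he h => ⟨he, fun h' => absurd h' h⟩
    have c : ∀ e ∈ E, e ∉ E1 → e ∈ E2 := fun e he h => ⟨he, fun _ => by
      by_contra h'; exact h ⟨he, h'⟩⟩
    have l1 : E1.ncard < N := by
      rw [← hN]
      exact Set.ncard_lt_ncard ⟨s1, fun h => (h he2).2 rfl⟩ hEf
    have l2 : E2.ncard < N := by
      rw [← hN]
      exact Set.ncard_lt_ncard ⟨s2, fun h => hne ((h he1).2 hvv)⟩ hEf
    have ser1 : ∀ x, ∃ e ∈ E1, e.1 = x := by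
      intro x
      by_cases hx : x = v
      · exact ⟨e1, ⟨he1, hne⟩, hvv.trans hx.symm⟩
      · exact ⟨d x, c1 _ (hdE x) (by rwa [hd]), hd x⟩
    have ser2 : ∀ x, ∃ e ∈ E2, e.1 = x := by
      intro x
      by_cases hx : x = v
      · exact ⟨e2, ⟨he2, fun _ => rfl⟩, hv.symm.trans hx.symm⟩
      · exact ⟨d x, c2 _ (hdE x) (by rwa [hd]), hd x⟩
    have I1 := IH _ l1 E1 rfl ser1
    have I2 := IH _ l2 E2 rfl ser2
    rcases I1 u with hu1 | hu1
    swap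
    · exact Or.inr (memoryless_lift hP s1 c1 hu1)
    rcases I2 u with hu2 | hu2
    swap
    · exact Or.inr (memoryless_lift hP s2 c2 hu2)
    left
    rcases I2 v with hv2 | hv2
    · exact combine hpi hcv (not_not.2 hP) s1 s2 c1 c2 c hu1 hv2
    · exact avoid_lift hpi s2 c2 hu2 hv2.wins

lemma lastNode_ofFn (A : Arena V k) (p : ℕ → V × Fin k × V) (hp : A.IsPlay p) (n : ℕ) :
    A.lastNode (List.ofFn fun j : Fin n => p j) = (p n).1 := by
  cases n with
  | zero => simp [Arena.lastNode, hp.1]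
  | succ n =>
    rw [List.ofFn_succ_last]
    simp [Arena.lastNode, (hp.2 n).2]

lemma isHistory_ofFn (A : Arena V k) (p : ℕ → V × Fin k × V) (hp : A.IsPlay p) (n : ℕ) :
    A.IsHistory (List.ofFn fun j : Fin n => p j) := by
  refine ⟨?_, ?_, ?_⟩
  · intro e he
    rw [List.mem_ofFn] at he
    obtain ⟨i, rfl⟩ := he
    exact (hp.2 i).1
  · show List.IsChain _ _
    rw [List.isChain_iff_getElem]
    intro i hi
    simp only [List.getElem_ofFn]
    exact (hp.2 i).2
  · intro e he
    cases n with
    | zero => simp at he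
    | succ n =>
      simp at he
      rw [← he]; exact hp.1

lemma to_list (A : Arena V k) {P : V → Prop} {G : Set (ℕ → Fin k)} {S : Type}
    {upd : S → V × Fin k × V → S} {ch : S → V → V × Fin k × V} {s0 : S}
    (h : WinsWith P A.E G S upd ch s0 A.vini) :
    A.IsStrategy P (fun l => ch (l.foldl upd s0) (A.lastNode l)) ∧
    ∀ p, A.IsPlay p → A.Consistent P (fun l => ch (l.foldl upd s0) (A.lastNode l)) p →
      Arena.colorSeq p ∈ G := by
  refine ⟨fun l _ hl => h.1 _ _ hl, ?_⟩
  intro p hp hc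
  refine h.2 p (fun n => (List.ofFn fun j : Fin n => p j).foldl upd s0) hp (by simp) ?_ ?_
  · intro n
    try simp only
    rw [List.ofFn_succ_last, List.foldl_append]
    simp
  · intro n hn
    cases n with
    | zero =>
      rw [hp.1] at hn ⊢
      exact hc.1 hn
    | succ n =>
      rw [← (hp.2 n).2] at hn
      have := hc.2 n hn
      try simp only at this
      rw [lastNode_ofFn A p hp] at this
      exact this

lemma of_list (A : Arena V k) {P : V → Prop} {G : Set (ℕ → Fin k)}
    {σ : List (V × Fin k × V) → V × Fin k × V} (h : A.IsStrategy P σ)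
    (hw : ∀ p, A.IsPlay p → A.Consistent P σ p → Arena.colorSeq p ∈ G) :
    Wins P A.E G A.vini := by
  classical
  choose d hdE hd using A.serial
  refine ⟨List (V × Fin k × V), fun l e => l ++ [e],
    fun l x => if σ l ∈ A.E ∧ (σ l).1 = x then σ l else d x, [], ?_, ?_⟩
  · intro l x _
    by_cases hx : σ l ∈ A.E ∧ (σ l).1 = x
    · simp only [if_pos hx]; exact hx
    · simp only [if_neg hx]; exact ⟨hdE x, hd x⟩
  intro p s hp h0 hs hc
  have hp' : A.IsPlay p := hp
  have hsn : ∀ n, s n = List.ofFn fun j : Fin n => p j := by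
    intro n
    induction n with
    | zero => simpa using h0
    | succ n ih => rw [hs, ih, List.ofFn_succ_last]; simp
  have key : ∀ n, P (p n).1 → p n = σ (List.ofFn fun j : Fin n => p j) := by
    intro n hn
    have h1 := hc n hn
    have h2 := h _ (isHistory_ofFn A p hp' n) (by rwa [lastNode_ofFn A p hp'])
    rw [lastNode_ofFn A p hp'] at h2
    rw [hsn] at h1
    exact h1.trans (if_pos h2)
  refine hw p hp' ⟨fun hv => ?_, fun i hi => ?_⟩
  · have := key 0 (by rwa [hp.1])
    simpa using this
  · exact key (i+1) (by rwa [← (hp.2 i).2])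

end PIC

theorem determinacy_and_memoryless_for_prefixIndep_convex
    {k : ℕ} (hk : 1 ≤ k) {V : Type} [Fintype V] (A : Arena V k)
    (W : Set (ℕ → Fin k)) (hpi : PrefixIndep W) (hcv : ConvexGoal W) :
    ((∃ σ, A.WinningFor0 W σ) ∨ (∃ τ, A.WinningFor1 W τ)) ∧
      ((∃ τ, A.WinningFor1 W τ) →
        ∃ τ, A.WinningFor1 W τ ∧ A.Memoryless τ) := by
  have hm : PIC.MWins A.isV1 A.E Wᶜ A.vini → ∃ τ, A.WinningFor1 W τ ∧ A.Memoryless τ := by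
    rintro ⟨ch, h⟩
    have h' := PIC.to_list A h
    refine ⟨_, ⟨h'.1, h'.2⟩, ?_⟩
    intro l l' _ _ hl
    simp only [hl]
  rcases PIC.main A.isV1 hpi hcv _ A.E rfl A.serial A.vini with h | h
  · refine ⟨Or.inl ?_, ?_⟩
    · obtain ⟨S, upd, ch, s0, h⟩ := h
      exact ⟨_, PIC.to_list A h⟩
    · rintro ⟨τ, hτ, hτ'⟩
      exact (PIC.disjoint_wins h (PIC.of_list A hτ hτ')).elim
  · obtain ⟨τ, h1, h2⟩ := hm h
    exact ⟨Or.inr ⟨τ, h1⟩, fun _ => ⟨τ, h1, h2⟩⟩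
end

section
/- Let G = (A, W_bn) be a k-colored game whose goal W_bn is the set of all bounded color sequences. Then G is determined, and if player 1 has a winning strategy, then player 1 has a memoryless winning strategy. -/
open Filter Topology

namespace Arena

variable {V : Type} {k : ℕ}

/-- A bounded invariant for player 0 in the edge set `E`. -/
def Inv (A : Arena V k) (E : Set (V × Fin k × V)) : Prop :=
  ∃ (C : ℕ) (S : V → (Fin k → ℤ) → Prop),
    S A.vini 0 ∧ (∀ v d, S v d → ∀ a b, |d a - d b| ≤ (C : ℤ)) ∧
    (∀ v d, S v d → ¬ A.isV1 v → ∃ e ∈ E, e.1 = v ∧ S e.2.2 (d + Pi.single e.2.1 1)) ∧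
    (∀ v d, S v d → A.isV1 v → ∀ e ∈ E, e.1 = v → S e.2.2 (d + Pi.single e.2.1 1))

theorem inv_combine (A : Arena V k) (E : Set (V × Fin k × V)) (e₁ e₂ : V × Fin k × V)
    (hne : e₁ ≠ e₂) (hv : e₁.1 = e₂.1) (h1 : A.isV1 e₁.1)
    (H1 : A.Inv (E \ {e₁})) (H2 : A.Inv (E \ {e₂})) : A.Inv E := by
  obtain ⟨C₁, S₁, i₁, b₁, z₁, o₁⟩ := H1
  obtain ⟨C₂, S₂, i₂, b₂, z₂, o₂⟩ := H2
  by_cases hreach : ∃ d, S₂ e₁.1 d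
  · obtain ⟨d, hd⟩ := hreach
    refine ⟨C₁ + C₂ + C₂, fun u w => ∃ x y, w = x + y - d ∧
      ((S₁ u x ∧ S₂ e₁.1 y) ∨ (S₁ e₁.1 x ∧ S₂ u y)), ?_, ?_, ?_, ?_⟩
    · exact ⟨0, d, by simp, Or.inl ⟨i₁, hd⟩⟩
    · rintro v w ⟨x, y, rfl, h⟩ a b
      have hx : |x a - x b| ≤ (C₁ : ℤ) := by
        rcases h with h | h
        · exact b₁ _ _ h.1 a b
        · exact b₁ _ _ h.1 a b
      have hy : |y a - y b| ≤ (C₂ : ℤ) := by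
        rcases h with h | h
        · exact b₂ _ _ h.2 a b
        · exact b₂ _ _ h.2 a b
      have hdd := b₂ _ _ hd a b
      simp only [Pi.add_apply, Pi.sub_apply]
      rw [abs_le] at *
      push_cast
      constructor <;> linarith [hx.1, hx.2, hy.1, hy.2, hdd.1, hdd.2]
    · rintro v w ⟨x, y, rfl, h⟩ hv0
      rcases h with ⟨hx, hy⟩ | ⟨hx, hy⟩
      · obtain ⟨e, he, hs, hS⟩ := z₁ _ _ hx hv0
        exact ⟨e, he.1, hs, _, y, by abel, Or.inl ⟨hS, hy⟩⟩
      · obtain ⟨e, he, hs, hS⟩ := z₂ _ _ hy hv0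
        exact ⟨e, he.1, hs, x, _, by abel, Or.inr ⟨hx, hS⟩⟩
    · rintro v w ⟨x, y, rfl, h⟩ hv1 e he hs
      have key : ∀ x y, S₁ e₁.1 x → S₂ e₁.1 y → e.1 = e₁.1 → 
          ∃ x' y', x + y - d + Pi.single e.2.1 1 = x' + y' - d ∧
          ((S₁ e.2.2 x' ∧ S₂ e₁.1 y') ∨ (S₁ e₁.1 x' ∧ S₂ e.2.2 y')) := by
        intro x y hx hy hee
        by_cases hc : e = e₁
        · refine ⟨x, y + Pi.single e.2.1 1, by abel, Or.inr ⟨hx, ?_⟩⟩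
          exact o₂ _ _ hy h1 e ⟨he, fun h => hne (hc.symm.trans h)⟩ hee
        · refine ⟨x + Pi.single e.2.1 1, y, by abel, Or.inl ⟨?_, hy⟩⟩
          exact o₁ _ _ hx h1 e ⟨he, hc⟩ hee
      by_cases hvv : v = e₁.1
      · subst hvv
        rcases h with ⟨hx, hy⟩ | ⟨hx, hy⟩
        · exact key x y hx hy hs
        · exact key x y hx hy hs
      · rcases h with ⟨hx, hy⟩ | ⟨hx, hy⟩
        · refine ⟨x + Pi.single e.2.1 1, y, by abel, Or.inl ⟨?_, hy⟩⟩
          exact o₁ _ _ hx hv1 e ⟨he, fun h => hvv (by rw [← hs, h])⟩ hs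
        · refine ⟨x, y + Pi.single e.2.1 1, by abel, Or.inr ⟨hx, ?_⟩⟩
          exact o₂ _ _ hy hv1 e ⟨he, fun h => hvv (by rw [← hs, h, hv])⟩ hs
  · refine ⟨C₂, S₂, i₂, b₂, ?_, ?_⟩
    · intro v d hS h0
      obtain ⟨e, he, h⟩ := z₂ v d hS h0
      exact ⟨e, he.1, h⟩
    · intro v d hS hv1 e he hs
      refine o₂ v d hS hv1 e ⟨he, fun h => hreach ⟨d, ?_⟩⟩ hs
      have : v = e₁.1 := by rw [← hs, h, hv]
      rwa [← this]

theorem cnt_succ (x : ℕ → Fin k) (n : ℕ) :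
    (fun a => (cnt x a (n + 1) : ℤ)) = (fun a => (cnt x a n : ℤ)) + Pi.single (x n) 1 := by
  funext a
  simp only [cnt, Finset.range_add_one, Finset.filter_insert, Pi.add_apply, Pi.single_apply]
  by_cases h : x n = a
  · simp [h]
  · simp [h, Ne.symm h]

theorem cnt_zero (x : ℕ → Fin k) : (fun a => (cnt x a 0 : ℤ)) = 0 := by
  funext a
  simp [cnt]

/-- Existence of a deterministic player 1 restriction. -/
theorem exists_min [Fintype V] (A : Arena V k) (h : ¬ A.Inv A.E) :
    ∃ E : Set (V × Fin k × V), E ⊆ A.E ∧ (∀ v, ∃ e ∈ E, e.1 = v) ∧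
      (∀ e ∈ A.E, ¬ A.isV1 e.1 → e ∈ E) ∧ ¬ A.Inv E ∧
      ∀ e ∈ E, ∀ f ∈ E, A.isV1 e.1 → e.1 = f.1 → e = f := by
  classical
  let Q : Set (Set (V × Fin k × V)) := {E | E ⊆ A.E ∧ (∀ v, ∃ e ∈ E, e.1 = v) ∧
      (∀ e ∈ A.E, ¬ A.isV1 e.1 → e ∈ E) ∧ ¬ A.Inv E}
  have hQ : Q.Nonempty := ⟨A.E, subset_rfl, A.serial, fun e he _ => he, h⟩
  obtain ⟨E, hE⟩ := (Set.toFinite Q).exists_minimal hQ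
  have hm : ∀ e ∈ E, ∀ f ∈ E, e ≠ f → e.1 = f.1 → A.isV1 e.1 → A.Inv (E \ {e}) := by
    intro e he f hf hne hs h1
    by_contra hI
    have hmem : E \ {e} ∈ Q := by
      refine ⟨fun g hg => hE.1.1 hg.1, fun v => ?_, fun g hg hg0 => ⟨hE.1.2.2.1 g hg hg0, ?_⟩, hI⟩
      · obtain ⟨g, hg, hgv⟩ := hE.1.2.1 v
        by_cases hge : g = e
        · exact ⟨f, ⟨hf, fun h => hne h.symm⟩, by rw [← hs, ← hge, hgv]⟩
        · exact ⟨g, ⟨hg, hge⟩, hgv⟩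
      · rintro rfl
        exact hg0 h1
    exact (hE.2 hmem Set.diff_subset he).2 rfl
  refine ⟨E, hE.1.1, hE.1.2.1, hE.1.2.2.1, hE.1.2.2.2, fun e he f hf h1 hs => ?_⟩
  by_contra hne
  exact hE.1.2.2.2 (A.inv_combine E e f hne hs h1 (hm e he f hf hne hs h1)
    (hm f hf e he (Ne.symm hne) hs.symm (hs ▸ h1)))

theorem play_inv (A : Arena V k) (E : Set (V × Fin k × V))
    (hdet : ∀ e ∈ E, ∀ f ∈ E, A.isV1 e.1 → e.1 = f.1 → e = f)
    (p : ℕ → V × Fin k × V) (hp : A.IsPlay p) (hpE : ∀ i, p i ∈ E)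
    (hb : BoundedSeq (colorSeq p)) : A.Inv E := by
  obtain ⟨C, hC⟩ := hb
  refine ⟨C, fun v d => ∃ n, v = (p n).1 ∧ d = fun a => (cnt (colorSeq p) a n : ℤ),
    ⟨0, hp.1.symm, (cnt_zero _).symm⟩, ?_, ?_, ?_⟩
  · rintro v d ⟨n, rfl, rfl⟩ a b
    exact hC a b n
  · rintro v d ⟨n, rfl, rfl⟩ _
    exact ⟨p n, hpE n, rfl, n + 1, (hp.2 n).2, (cnt_succ _ n).symm⟩
  · rintro v d ⟨n, rfl, rfl⟩ h1 e he hs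
    obtain rfl := hdet (p n) (hpE n) e he h1 hs.symm
    exact ⟨n + 1, (hp.2 n).2, (cnt_succ _ n).symm⟩

theorem ofFn_concat (p : ℕ → V × Fin k × V) (n : ℕ) :
    (List.ofFn fun j : Fin (n + 1) => p j) = (List.ofFn fun j : Fin n => p j) ++ [p n] := by
  rw [List.ofFn_succ_last]
  simp

theorem lastNode_concat (A : Arena V k) (l : List (V × Fin k × V)) (e : V × Fin k × V) :
    A.lastNode (l ++ [e]) = e.2.2 := by
  simp [lastNode]

theorem lastNode_ofFn (A : Arena V k) (p : ℕ → V × Fin k × V) (hp : A.IsPlay p) (n : ℕ) :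
    A.lastNode (List.ofFn fun j : Fin n => p j) = (p n).1 := by
  cases n with
  | zero => simp [lastNode, hp.1]
  | succ n => rw [ofFn_concat, lastNode_concat, (hp.2 n).2]

theorem consistent_iff (A : Arena V k) (inP : V → Prop)
    (σ : List (V × Fin k × V) → V × Fin k × V) (p : ℕ → V × Fin k × V) (hp : A.IsPlay p) :
    A.Consistent inP σ p ↔
      ∀ n, inP (p n).1 → p n = σ (List.ofFn fun j : Fin n => p j) := by
  constructor
  · rintro ⟨h0, h⟩ n hn
    cases n with
    | zero => simpa using h0 (hp.1 ▸ hn)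
    | succ n => exact h n ((hp.2 n).2 ▸ hn)
  · intro h
    refine ⟨fun h0 => by simpa using h 0 (hp.1.symm ▸ h0), fun i hi => h (i + 1) ?_⟩
    rw [← (hp.2 i).2]
    exact hi

/-- color counts of a finite history -/
def cntL (l : List (V × Fin k × V)) : Fin k → ℤ := fun a => ((l.map fun e => e.2.1).count a : ℤ)

theorem cntL_ofFn (p : ℕ → V × Fin k × V) (n : ℕ) :
    cntL (List.ofFn fun j : Fin n => p j) = fun a => (cnt (colorSeq p) a n : ℤ) := by
  induction n with
  | zero => funext a; simp [cntL, cnt]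
  | succ n ih =>
    rw [cnt_succ, ← ih, ofFn_concat]
    funext a
    simp only [cntL, List.map_append, List.count_append, List.map_cons, List.map_nil,
      Pi.add_apply, Pi.single_apply, colorSeq, List.count_singleton]
    by_cases h : (p n).2.1 = a
    · simp [h]
    · simp [h, Ne.symm h]

theorem win0_of_inv (A : Arena V k) (h : A.Inv A.E) :
    ∃ σ, A.WinningFor0 {x | BoundedSeq x} σ := by
  classical
  obtain ⟨C, S, i, b, z, o⟩ := h
  have hch : ∀ v d, ∃ e ∈ A.E, e.1 = v ∧
      (S v d → ¬ A.isV1 v → S e.2.2 (d + Pi.single e.2.1 1)) := by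
    intro v d
    by_cases hS : S v d ∧ ¬ A.isV1 v
    · obtain ⟨e, he, hs, h⟩ := z v d hS.1 hS.2
      exact ⟨e, he, hs, fun _ _ => h⟩
    · obtain ⟨e, he, hs⟩ := A.serial v
      exact ⟨e, he, hs, fun h1 h2 => absurd ⟨h1, h2⟩ hS⟩
  choose g hgE hgs hg using hch
  refine ⟨fun l => g (A.lastNode l) (cntL l), fun l _ _ => ⟨hgE _ _, hgs _ _⟩, fun p hp hc => ?_⟩
  rw [consistent_iff A _ _ p hp] at hc
  have key : ∀ n, S (p n).1 (fun a => (cnt (colorSeq p) a n : ℤ)) := by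
    intro n
    induction n with
    | zero => rw [cnt_zero, hp.1]; exact i
    | succ n ih =>
      rw [cnt_succ, ← (hp.2 n).2]
      by_cases h1 : A.isV1 (p n).1
      · exact o _ _ ih h1 (p n) (hp.2 n).1 rfl
      · have := hc n h1
        simp only [lastNode_ofFn A p hp, cntL_ofFn] at this
        have h2 := hg _ _ ih h1
        rw [← this] at h2
        exact h2
  exact ⟨C, fun a b' n => b _ _ (key n) a b'⟩

theorem win1_of_not_inv [Fintype V] (A : Arena V k) (h : ¬ A.Inv A.E) :
    ∃ τ, A.WinningFor1 {x | BoundedSeq x} τ ∧ A.Memoryless τ := by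
  obtain ⟨E, hEA, hser, h0, hI, hdet⟩ := A.exists_min h
  choose f hfE hfs using hser
  refine ⟨fun l => f (A.lastNode l), ⟨fun l _ _ => ⟨hEA (hfE _), hfs _⟩, fun p hp hc hb => ?_⟩,
    fun l l' _ _ h => by simp only [h]⟩
  rw [consistent_iff A _ _ p hp] at hc
  refine hI (A.play_inv E hdet p hp (fun n => ?_) hb)
  by_cases h1 : A.isV1 (p n).1
  · rw [hc n h1]; exact hfE _
  · exact h0 _ (hp.2 n).1 h1

theorem not_both (A : Arena V k) (W : Set (ℕ → Fin k))
    (σ τ : List (V × Fin k × V) → V × Fin k × V)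
    (h0 : A.WinningFor0 W σ) (h1 : A.WinningFor1 W τ) : False := by
  classical
  let ρ : List (V × Fin k × V) → V × Fin k × V :=
    fun l => if A.isV1 (A.lastNode l) then τ l else σ l
  let H : ℕ → List (V × Fin k × V) := fun n => Nat.rec [] (fun _ l => l ++ [ρ l]) n
  let p : ℕ → V × Fin k × V := fun n => ρ (H n)
  have hH : ∀ n, H (n + 1) = H n ++ [p n] := fun n => rfl
  have hHp : ∀ n, H n = List.ofFn fun j : Fin n => p j := by
    intro n
    induction n with
    | zero => simp [H]
    | succ n ih => rw [ofFn_concat, hH, ih]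
  have hρ : ∀ l, A.IsHistory l → ρ l ∈ A.E ∧ (ρ l).1 = A.lastNode l := by
    intro l hl
    by_cases h : A.isV1 (A.lastNode l)
    · simp only [ρ, if_pos h]; exact h1.1 l hl h
    · simp only [ρ, if_neg h]; exact h0.1 l hl h
  have hist : ∀ n, A.IsHistory (H n) := by
    intro n
    induction n with
    | zero => exact ⟨by simp [H], List.isChain_nil, by simp [H]⟩
    | succ n ih =>
      obtain ⟨a, b⟩ := hρ _ ih
      rw [hH]
      refine ⟨?_, ?_, ?_⟩
      · intro e he
        rcases List.mem_append.1 he with he | he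
        · exact ih.1 e he
        · rw [List.mem_singleton.1 he]; exact a
      · refine List.isChain_append.2 ⟨ih.2.1, by simp, ?_⟩
        intro x hx y hy
        have hy' : p n = y := by simpa using hy
        subst hy'
        refine Eq.trans ?_ b.symm
        have hx' : (H n).getLast? = some x := hx
        simp [lastNode, hx']
      · intro e he
        cases hl : H n with
        | nil =>
          rw [hl] at he
          have : p n = e := by simpa using he
          subst this
          refine b.trans ?_
          rw [hl]; rfl
        | cons x xs =>
          rw [hl] at he
          refine ih.2.2 e ?_
          rw [hl]; simpa using he
  have hp : A.IsPlay p := by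
    refine ⟨(hρ _ (hist 0)).2, fun i => ⟨(hρ _ (hist i)).1, ?_⟩⟩
    have := (hρ _ (hist (i + 1))).2
    rw [hH, lastNode_concat] at this
    exact this.symm
  have hlast : ∀ n, A.lastNode (H n) = (p n).1 := fun n => by rw [hHp, lastNode_ofFn A p hp]
  refine h1.2 p hp ?_ (h0.2 p hp ?_)
  · rw [consistent_iff A _ _ p hp]
    intro n hn
    rw [← hHp]
    exact if_pos ((hlast n).symm ▸ hn)
  · rw [consistent_iff A _ _ p hp]
    intro n hn
    rw [← hHp]
    refine if_neg ?_
    rw [hlast]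
    exact hn

end Arena

theorem bounded_goal_determined_and_memoryless_for_player1
    {k : ℕ} (hk : 1 ≤ k) {V : Type} [Fintype V] (A : Arena V k) :
    ((∃ σ, A.WinningFor0 {x | BoundedSeq x} σ) ∨
        (∃ τ, A.WinningFor1 {x | BoundedSeq x} τ)) ∧
      ((∃ τ, A.WinningFor1 {x | BoundedSeq x} τ) →
        ∃ τ, A.WinningFor1 {x | BoundedSeq x} τ ∧ A.Memoryless τ) := by
  by_cases h : A.Inv A.E
  · obtain ⟨σ, hσ⟩ := A.win0_of_inv h
    exact ⟨Or.inl ⟨σ, hσ⟩, fun ⟨τ, hτ⟩ => (A.not_both _ σ τ hσ hτ).elim⟩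
  · obtain ⟨τ, hτ, hm⟩ := A.win1_of_not_inv h
    exact ⟨Or.inr ⟨τ, hτ⟩, fun _ => ⟨τ, hτ, hm⟩⟩
end

section
/- Let d ≥ 1, let L : Fin d → Fin d → ℚ, and let A = {(A_1,w_1),…,(A_m,w_m)} be a finite nonempty set of pairs consisting of an integer d×d matrix and a positive natural number weight. Assume that no natural linear combination of A has ratio L, i.e., there are no c_1,…,c_m ∈ ℕ, not all zero, with Σ_i c_i·A_i = (Σ_i c_i·w_i)·L (entrywise). Let {(B_n, u_n)}_{n∈ℕ} be an infinite sequence of elements of A, and set S_n = Σ_{l=0}^{n} B_l and U_n = Σ_{l=0}^{n} u_l. Then there exist indices i, j ∈ Fin d such that the sequence S_n(i,j)/U_n does not converge to L i j as n → ∞. -/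
open Filter Topology

theorem aux_rat {m : ℕ} {ι : Type*} (p : Fin m → ℝ) (hp : ∀ l, 0 ≤ p l) (hne : ∃ l, p l ≠ 0)
    (V : ι → Fin m → ℚ) (hV : ∀ i, ∑ l, p l * (V i l : ℝ) = 0) :
    ∃ c : Fin m → ℕ, (∃ l, c l ≠ 0) ∧ ∀ i, ∑ l, (c l : ℚ) * V i l = 0 := by
  classical
  let W := Submodule.span ℚ (Set.range p)
  haveI : FiniteDimensional ℚ W := FiniteDimensional.span_of_finite ℚ (Set.finite_range p)
  let b := Module.finBasis ℚ W
  let x : Fin m → W := fun l => ⟨p l, Submodule.subset_span ⟨l, rfl⟩⟩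
  have hx : ∀ l, p l = ∑ s, ((b.repr (x l) s : ℚ) : ℝ) * (b s : ℝ) := by
    intro l
    have h := congrArg (Subtype.val) (b.sum_repr (x l))
    simp only [AddSubmonoidClass.coe_finset_sum, Submodule.coe_smul, Rat.smul_def] at h
    exact h.symm
  have hrel : ∀ i s, ∑ l, b.repr (x l) s * V i l = 0 := by
    intro i s
    have h0 : ∑ l, V i l • x l = 0 := by
      apply Subtype.ext
      simp only [AddSubmonoidClass.coe_finset_sum, Submodule.coe_smul, Rat.smul_def]
      rw [← Submodule.coe_zero (p := W)] at *
      simpa [x, mul_comm] using hV i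
    have h1 := congrArg (fun y => b.repr y s) h0
    simp only [map_sum, map_smul, Finsupp.coe_finset_sum, Finset.sum_apply, Finsupp.smul_apply,
      smul_eq_mul, map_zero, Finsupp.coe_zero, Pi.zero_apply] at h1
    rw [← h1]
    exact Finset.sum_congr rfl fun l _ => mul_comm _ _
  have hopen : IsOpen {y : Fin (Module.finrank ℚ W) → ℝ |
      ∀ l, 0 < p l → 0 < ∑ s, ((b.repr (x l) s : ℚ) : ℝ) * y s} := by
    simp only [Set.setOf_forall]
    refine isOpen_iInter_of_finite fun l => isOpen_iInter_of_finite fun _ => ?_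
    exact isOpen_lt continuous_const (by fun_prop)
  have hdense : DenseRange (fun (q : Fin (Module.finrank ℚ W) → ℚ) s => ((q s : ℚ) : ℝ)) :=
    DenseRange.piMap (fun _ => Rat.denseRange_cast)
  obtain ⟨q, hq⟩ := hdense.exists_mem_open hopen
    ⟨fun s => (b s : ℝ), fun l hl => by rw [← hx l]; exact hl⟩
  let r : Fin m → ℚ := fun l => ∑ s, b.repr (x l) s * q s
  have hrpos : ∀ l, 0 < p l → 0 < r l := by
    intro l hl
    have h : 0 < ∑ s, ((b.repr (x l) s : ℚ) : ℝ) * ((q s : ℚ) : ℝ) := hq l hl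
    simp only [r]
    exact_mod_cast h
  have hr0 : ∀ l, 0 ≤ r l := by
    intro l
    rcases (hp l).lt_or_eq with h | h
    · exact (hrpos l h).le
    · have : x l = 0 := Subtype.ext h.symm
      simp [r, this]
  have hrV : ∀ i, ∑ l, r l * V i l = 0 := by
    intro i
    simp only [r, Finset.sum_mul]
    rw [Finset.sum_comm]
    refine Finset.sum_eq_zero fun s _ => ?_
    have := congrArg (fun z => z * q s) (hrel i s)
    simp only [Finset.sum_mul, zero_mul] at this
    rw [← this]
    exact Finset.sum_congr rfl fun l _ => by ring
  let N : ℕ := ∏ l, (r l).den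
  have hN : N ≠ 0 := Finset.prod_ne_zero_iff.mpr fun l _ => (r l).den_nz
  have hc : ∀ l, ∃ c : ℕ, (c : ℚ) = N * r l := by
    intro l
    obtain ⟨k, hk⟩ : (r l).den ∣ N := Finset.dvd_prod_of_mem _ (Finset.mem_univ l)
    refine ⟨k * (r l).num.toNat, ?_⟩
    have h1 : (((r l).num.toNat : ℕ) : ℚ) = ((r l).num : ℚ) := by
      exact_mod_cast Int.toNat_of_nonneg (Rat.num_nonneg.mpr (hr0 l))
    have h2 := Rat.mul_den_eq_num (r l)
    rw [hk]
    push_cast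
    rw [h1, ← h2]
    ring
  choose c hc using hc
  refine ⟨c, ?_, ?_⟩
  · obtain ⟨l, hl⟩ := hne
    refine ⟨l, fun h => ?_⟩
    have h1 := hc l
    have h2 := hrpos l (lt_of_le_of_ne (hp l) (Ne.symm hl))
    rw [h] at h1
    have : (0:ℚ) < N * r l := mul_pos (by exact_mod_cast Nat.pos_of_ne_zero hN) h2
    simp at h1
    rcases h1 with h1 | h1
    · exact hN h1
    · exact h2.ne' h1
  · intro i
    simp only [hc, mul_assoc]
    rw [← Finset.mul_sum, hrV, mul_zero]

theorem no_nlc_ratio_implies_partial_sums_do_not_converge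
    {d : ℕ} (hd : 1 ≤ d) (L : Fin d → Fin d → ℚ)
    {m : ℕ} (hm : 1 ≤ m)
    (A : Fin m → Matrix (Fin d) (Fin d) ℤ) (w : Fin m → ℕ)
    (hw : ∀ i : Fin m, 0 < w i)
    (hnlc : ¬ ∃ c : Fin m → ℕ, (∃ i : Fin m, c i ≠ 0) ∧
      ∀ i j : Fin d,
        (∑ l : Fin m, (c l : ℚ) * (A l i j : ℚ)) =
          (∑ l : Fin m, (c l : ℚ) * (w l : ℚ)) * L i j)
    (B : ℕ → Fin m) :
    ∃ i j : Fin d,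
      ¬ Tendsto
        (fun n : ℕ =>
          ((∑ l ∈ Finset.range (n + 1), A (B l) i j : ℤ) : ℝ) /
            ((∑ l ∈ Finset.range (n + 1), w (B l) : ℕ) : ℝ))
        atTop (𝓝 ((L i j : ℚ) : ℝ)) := by
  classical
  by_contra hcon
  push Not at hcon
  let U : ℕ → ℝ := fun n => ((∑ l ∈ Finset.range (n + 1), w (B l) : ℕ) : ℝ)
  let k : ℕ → Fin m → ℕ := fun n l => ((Finset.range (n + 1)).filter (fun t => B t = l)).card
  have key : ∀ (n : ℕ) (f : Fin m → ℝ),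
      ∑ l, (k n l : ℝ) * f l = ∑ t ∈ Finset.range (n + 1), f (B t) := by
    intro n f
    rw [← Finset.sum_fiberwise (Finset.range (n + 1)) B]
    refine Finset.sum_congr rfl fun l _ => ?_
    rw [Finset.sum_congr rfl (g := fun _ => f l)
      (fun t ht => by rw [(Finset.mem_filter.mp ht).2])]
    simp [k]
  have hU : ∀ n, 0 < U n := by
    intro n
    have : 0 < ∑ l ∈ Finset.range (n + 1), w (B l) :=
      Finset.sum_pos (fun l _ => hw _) ⟨0, by simp⟩
    exact Nat.cast_pos.mpr this
  let P : ℕ → Fin m → ℝ := fun n l => (k n l : ℝ) / U n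
  have keyP : ∀ (n : ℕ) (f : Fin m → ℝ),
      ∑ l, P n l * f l = (∑ t ∈ Finset.range (n + 1), f (B t)) / U n := by
    intro n f
    rw [← key, Finset.sum_div]
    exact Finset.sum_congr rfl fun l _ => by simp only [P]; ring
  have hPw : ∀ n, ∑ l, P n l * (w l : ℝ) = 1 := by
    intro n
    rw [keyP, div_eq_one_iff_eq (hU n).ne']
    simp [U]
  have hP0 : ∀ n l, 0 ≤ P n l := fun n l => div_nonneg (Nat.cast_nonneg _) (hU n).le
  have hP1 : ∀ n l, P n l ≤ 1 := by
    intro n l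
    have h1 : P n l * (w l : ℝ) ≤ ∑ l, P n l * (w l : ℝ) :=
      Finset.single_le_sum (f := fun l => P n l * (w l : ℝ))
        (fun l _ => mul_nonneg (hP0 n l) (Nat.cast_nonneg _)) (Finset.mem_univ l)
    have h2 : (1 : ℝ) ≤ w l := by exact_mod_cast hw l
    rw [hPw] at h1
    nlinarith [hP0 n l]
  obtain ⟨p, hpmem, φ, hφ, hlim⟩ :=
    (isCompact_Icc (a := (0 : Fin m → ℝ)) (b := 1)).tendsto_subseq
      (x := P) (fun n => ⟨fun l => hP0 n l, fun l => hP1 n l⟩)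
  have hlim' : ∀ f : Fin m → ℝ,
      Tendsto (fun n => ∑ l, P (φ n) l * f l) atTop (𝓝 (∑ l, p l * f l)) := by
    intro f
    exact tendsto_finsetSum _ fun l _ => ((tendsto_pi_nhds.mp hlim) l).mul_const _
  have hpw : ∑ l, p l * (w l : ℝ) = 1 := by
    have h := hlim' (fun l => (w l : ℝ))
    simp only [hPw] at h
    exact tendsto_nhds_unique h tendsto_const_nhds
  have hpA : ∀ i j, ∑ l, p l * (A l i j : ℝ) = (L i j : ℝ) := by
    intro i j
    have h := hlim' (fun l => (A l i j : ℝ))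
    refine tendsto_nhds_unique h ?_
    refine ((hcon i j).comp hφ.tendsto_atTop).congr fun n => ?_
    rw [keyP]
    simp [U]
  obtain ⟨c, hc, hcV⟩ := aux_rat p (fun l => hpmem.1 l)
    (by
      by_contra h
      push Not at h
      simp [h] at hpw)
    (fun (ij : Fin d × Fin d) l => (A l ij.1 ij.2 : ℚ) - (w l : ℚ) * L ij.1 ij.2)
    (by
      rintro ⟨i, j⟩
      push_cast
      simp only [mul_sub, Finset.sum_sub_distrib, ← mul_assoc]
      rw [← Finset.sum_mul, hpA, hpw]
      ring)
  refine hnlc ⟨c, hc, fun i j => ?_⟩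
  have h := hcV (i, j)
  simp only [mul_sub, Finset.sum_sub_distrib, ← mul_assoc] at h
  rw [← Finset.sum_mul] at h
  exact sub_eq_zero.mp h
end

section
/- Let {a_n}_{n≥1} be a sequence of integers, let c, c', c'' ∈ ℤ and k ∈ ℤ with k ≥ 1, and let {x_i}_{i≥1} be a strictly increasing sequence of positive integers such that (i) x_1 = 1, (ii) x_{i+2} − x_{i+1} = x_{i+1} − x_i + k for all i ≥ 1, and (iii) for all i ≥ 1: c + c'·i + min{a_n : x_i ≤ n < x_{i+1}} ≤ min{a_n : x_{i+1} ≤ n < x_{i+2}} and max{a_n : x_{i+1} ≤ n < x_{i+2}} ≤ c'' + c'·i + max{a_n : x_i ≤ n < x_{i+1}}. Then a_n/n converges to c'/k as n → ∞. -/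
open Filter Topology

theorem tendsto_of_quadratic_block_growth
    (a : ℕ → ℤ) (c c' c'' K : ℤ) (hK : 1 ≤ K)
    (x : ℕ → ℕ)
    (hpos : ∀ i : ℕ, 1 ≤ i → 1 ≤ x i)
    (hmono : ∀ i : ℕ, 1 ≤ i → x i < x (i + 1))
    (hx1 : x 1 = 1)
    (hstep : ∀ i : ℕ, 1 ≤ i →
      (x (i + 2) : ℤ) - (x (i + 1) : ℤ) = (x (i + 1) : ℤ) - (x i : ℤ) + K)
    (hmin : ∀ (i : ℕ) (hi : 1 ≤ i),
      c + c' * (i : ℤ) +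
          (Finset.Ico (x i) (x (i + 1))).inf'
            (Finset.nonempty_Ico.mpr (hmono i hi)) a ≤
        (Finset.Ico (x (i + 1)) (x (i + 2))).inf'
          (Finset.nonempty_Ico.mpr (hmono (i + 1) (by omega))) a)
    (hmax : ∀ (i : ℕ) (hi : 1 ≤ i),
      (Finset.Ico (x (i + 1)) (x (i + 2))).sup'
          (Finset.nonempty_Ico.mpr (hmono (i + 1) (by omega))) a ≤
        c'' + c' * (i : ℤ) +
          (Finset.Ico (x i) (x (i + 1))).sup'
            (Finset.nonempty_Ico.mpr (hmono i hi)) a) :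
    Tendsto (fun n : ℕ => (a n : ℝ) / (n : ℝ)) atTop (𝓝 ((c' : ℝ) / (K : ℝ))) := by
  obtain ⟨d, hd⟩ : ∃ d : ℤ, d = (x 2 : ℤ) - x 1 := ⟨_, rfl⟩
  have hd1 : 1 ≤ d := by have := hmono 1 le_rfl; simp at this; omega
  have hdiff : ∀ j : ℕ, (x (j + 2) : ℤ) - x (j + 1) = d + K * j := by
    intro j
    induction j with
    | zero => simp [hd]
    | succ j ih =>
      have := hstep (j + 1) (by omega)
      rw [ih] at this
      push_cast
      linarith
  have hx : ∀ j : ℕ, 2 * (x (j + 1) : ℤ) = 2 + 2 * j * d + K * (j * (j - 1)) := by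
    intro j
    induction j with
    | zero => simp [hx1]
    | succ j ih =>
      have := hdiff j
      push_cast
      linarith
  obtain ⟨m, hm⟩ : ∃ m : ℤ, m = (Finset.Ico (x 1) (x (1 + 1))).inf'
            (Finset.nonempty_Ico.mpr (hmono 1 le_rfl)) a := ⟨_, rfl⟩
  obtain ⟨M, hM⟩ : ∃ M : ℤ, M = (Finset.Ico (x 1) (x (1 + 1))).sup'
            (Finset.nonempty_Ico.mpr (hmono 1 le_rfl)) a := ⟨_, rfl⟩
  have hlo : ∀ j : ℕ, 2 * m + 2 * c * j + c' * (j * (j + 1)) ≤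
      2 * (Finset.Ico (x (j + 1)) (x (j + 1 + 1))).inf'
            (Finset.nonempty_Ico.mpr (hmono (j + 1) (by omega))) a := by
    intro j
    induction j with
    | zero => simp [hm]
    | succ j ih =>
      have := hmin (j + 1) (by omega)
      push_cast at this ⊢
      linarith
  have hhi : ∀ j : ℕ, 2 * (Finset.Ico (x (j + 1)) (x (j + 1 + 1))).sup'
            (Finset.nonempty_Ico.mpr (hmono (j + 1) (by omega))) a ≤
      2 * M + 2 * c'' * j + c' * (j * (j + 1)) := by
    intro j
    induction j with
    | zero => simp [hM]
    | succ j ih =>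
      have := hmax (j + 1) (by omega)
      push_cast at this ⊢
      linarith
  have hex : ∀ n : ℕ, 1 ≤ n → ∃ j : ℕ, x (j + 1) ≤ n ∧ n < x (j + 1 + 1) := by
    intro n hn
    induction n, hn using Nat.le_induction with
    | base => exact ⟨0, by simp [hx1], by have := hmono 1 le_rfl; simp at this ⊢; omega⟩
    | succ n hn ih =>
      obtain ⟨j, h1, h2⟩ := ih
      by_cases h : n + 1 < x (j + 1 + 1)
      · exact ⟨j, by omega, h⟩
      · exact ⟨j + 1, by omega, by have := hmono (j + 1 + 1) (by omega); omega⟩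
  obtain ⟨C, hC⟩ : ∃ C : ℤ, C = 2 * K * (|m| + |M|) + 2 * K * (|c| + |c''|)
      + |c'| * (4 * K + 4 * d + 2) := ⟨_, rfl⟩
  have hC0 : 0 ≤ C := by rw [hC]; positivity
  have key : ∀ n : ℕ, 1 ≤ n → ∃ j : ℕ, ((j : ℤ) + 1) ^ 2 ≤ 4 * n ∧
      |2 * K * a n - 2 * c' * n| ≤ C * (j + 1) := by
    intro n hn
    obtain ⟨j, h1, h2⟩ := hex n hn
    have hmem : n ∈ Finset.Ico (x (j + 1)) (x (j + 1 + 1)) := Finset.mem_Ico.mpr ⟨h1, h2⟩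
    have l1 := (hlo j).trans (mul_le_mul_of_nonneg_left (Finset.inf'_le a hmem) (by norm_num))
    have l2 := (mul_le_mul_of_nonneg_left (Finset.le_sup' a hmem) (by norm_num)).trans (hhi j)
    have e1 := hx j
    have e2 := hdiff j
    obtain ⟨r, hr⟩ : ∃ r : ℤ, r = (n : ℤ) - x (j + 1) := ⟨_, rfl⟩
    have hr0 : 0 ≤ r := by omega
    have hr1 : r ≤ d + K * j := by
      have : (n : ℤ) < x (j + 2) := by exact_mod_cast h2
      linarith
    have hn2 : 2 * (n : ℤ) = 2 + 2 * j * d + K * (j * (j - 1)) + 2 * r := by linarith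
    obtain ⟨J, hJ⟩ : ∃ J : ℤ, J = j := ⟨_, rfl⟩
    have hJ0 : 0 ≤ J := by omega
    have hJJ : 0 ≤ J * (J - 1) := by
      rcases hJ0.eq_or_lt with h | h
      · simp [← h]
      · exact mul_nonneg hJ0 (by omega)
    refine ⟨j, ?_, ?_⟩
    · rw [← hJ] at hr1 hn2 l1 l2 ⊢
      have t1 : J * 1 ≤ J * d := mul_le_mul_of_nonneg_left hd1 hJ0
      have t2 : 1 * (J * (J - 1)) ≤ K * (J * (J - 1)) := mul_le_mul_of_nonneg_right hK hJJ
      nlinarith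
    · rw [← hJ] at hr1 hn2 l1 l2 ⊢
      obtain ⟨s, hs⟩ : ∃ s : ℤ, s = 2 * K * J - 2 - 2 * J * d - 2 * r := ⟨_, rfl⟩
      have hKJ : 0 ≤ K * J := mul_nonneg (by omega) hJ0
      have hdJ : 0 ≤ d * J := mul_nonneg (by omega) hJ0
      have hs1 : |s| ≤ (4 * K + 4 * d + 2) * (J + 1) := by
        rw [abs_le]; constructor <;> nlinarith
      have hcs : |c' * s| ≤ |c'| * ((4 * K + 4 * d + 2) * (J + 1)) := by
        rw [abs_mul]; exact mul_le_mul_of_nonneg_left hs1 (abs_nonneg _)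
      have hK0 : 0 ≤ K := by omega
      have b1 := mul_le_mul_of_nonneg_left l1 hK0
      have b2 := mul_le_mul_of_nonneg_left l2 hK0
      have en : c' * (2 * (n : ℤ)) = c' * (2 + 2 * J * d + K * (J * (J - 1)) + 2 * r) := by
        rw [hn2]
      have es : c' * s = c' * (2 * K * J - 2 - 2 * J * d - 2 * r) := by rw [hs]
      have g1 := mul_le_mul_of_nonneg_left (neg_abs_le m) hK0
      have g2 := mul_le_mul_of_nonneg_left (le_abs_self M) hK0
      have g3 := mul_le_mul_of_nonneg_left (neg_abs_le c) hKJ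
      have g4 := mul_le_mul_of_nonneg_left (le_abs_self c'') hKJ
      have p1 := mul_nonneg hK0 (abs_nonneg m)
      have p2 := mul_nonneg hK0 (abs_nonneg M)
      have p3 := mul_nonneg hK0 (abs_nonneg c)
      have p4 := mul_nonneg hK0 (abs_nonneg c'')
      have q1 := mul_nonneg hKJ (abs_nonneg m)
      have q2 := mul_nonneg hKJ (abs_nonneg M)
      have q3 := mul_nonneg hKJ (abs_nonneg c)
      have q4 := mul_nonneg hKJ (abs_nonneg c'')
      obtain ⟨f1, f2⟩ := abs_le.mp hcs
      rw [hC, abs_le]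
      constructor <;> linarith
  have hKr : (1 : ℝ) ≤ K := by exact_mod_cast hK
  rw [tendsto_iff_dist_tendsto_zero]
  have hlim : Tendsto (fun n : ℕ => (C : ℝ) / √(n : ℝ)) atTop (𝓝 0) :=
    Tendsto.const_div_atTop (Real.tendsto_sqrt_atTop.comp tendsto_natCast_atTop_atTop) _
  refine squeeze_zero' (Eventually.of_forall fun _ => dist_nonneg) ?_ hlim
  filter_upwards [eventually_ge_atTop 1] with n hn
  obtain ⟨j, h1, h2⟩ := key n hn
  have h1r : ((j : ℝ) + 1) ^ 2 ≤ 4 * n := by exact_mod_cast h1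
  have h2r : |2 * (K : ℝ) * a n - 2 * c' * n| ≤ C * (j + 1) := by exact_mod_cast h2
  have hCr : (0 : ℝ) ≤ C := by exact_mod_cast hC0
  have hnr : (0 : ℝ) < n := by exact_mod_cast hn
  have hs : 0 < √(n : ℝ) := Real.sqrt_pos.mpr hnr
  have hss : √(n : ℝ) * √(n : ℝ) = n := Real.mul_self_sqrt hnr.le
  have hj : (j : ℝ) + 1 ≤ 2 * √(n : ℝ) := by
    refine abs_le_of_sq_le_sq' ?_ (by positivity) |>.2
    nlinarith
  have e : (a n : ℝ) / n - c' / K = (2 * (K : ℝ) * a n - 2 * c' * n) / (2 * K * n) := by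
    field_simp
  have hpos2 : 0 < 2 * (K : ℝ) * n := by positivity
  rw [Real.dist_eq, e, abs_div, abs_of_pos hpos2, div_le_div_iff₀ hpos2 hs]
  calc _ ≤ C * (2 * √(n : ℝ)) * √(n : ℝ) := by
        gcongr
        exact h2r.trans (mul_le_mul_of_nonneg_left hj hCr)
    _ = C * (2 * 1 * n) := by linear_combination 2 * (C : ℝ) * hss
    _ ≤ _ := by gcongr
end

section
/- Let G be a k-colored graph containing a nonempty finite connected set of simple loops having a natural linear combination with ratio L : Fin k → Fin k → ℝ. Then there exists an infinite path ρ in G with color limit L. -/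
variable {V : Type} [Fintype V] [DecidableEq V] {k : ℕ}

/-- An infinite path in the `k`-colored graph with edge set `E`. -/
def IsInfPath (E : Finset (V × Fin k × V)) (p : ℕ → V × Fin k × V) : Prop :=
  ∀ i : ℕ, p i ∈ E ∧ (p i).2.2 = (p (i + 1)).1

/-- Number of edges of color `a` among the first `n` edges of `p`. -/
def cntP (p : ℕ → V × Fin k × V) (a : Fin k) (n : ℕ) : ℕ :=
  ((Finset.range n).filter fun i => (p i).2.1 = a).card

/-- `diff_{a,b}(p^{≤n})`. -/
def diffP (p : ℕ → V × Fin k × V) (a b : Fin k) (n : ℕ) : ℤ :=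
  (cntP p a n : ℤ) - (cntP p b n : ℤ)

/-- The infinite path `p` has color limit `L`. -/
def HasColorLimitP (p : ℕ → V × Fin k × V) (L : Fin k → Fin k → ℝ) : Prop :=
  ∀ i j : Fin k,
    Filter.Tendsto (fun n : ℕ => (diffP p i j n : ℝ) / (n : ℝ))
      Filter.atTop (nhds (L i j))

/-- A finite path in the graph, as a list of edges. -/
def IsFinPath (E : Finset (V × Fin k × V)) (σ : List (V × Fin k × V)) : Prop :=
  (∀ e ∈ σ, e ∈ E) ∧ List.Chain' (fun e f => e.2.2 = f.1) σ

/-- A simple loop: a nonempty finite path whose first node equals its last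
node and whose sources (i.e., all visited nodes except the repeated final one)
are pairwise distinct. -/
def IsSimpleLoop (E : Finset (V × Fin k × V)) (σ : List (V × Fin k × V)) : Prop :=
  IsFinPath E σ ∧ σ ≠ [] ∧
    σ.head?.map Prod.fst = σ.getLast?.map (fun e => e.2.2) ∧
    (σ.map Prod.fst).Nodup

/-- `diff_{a,b}` of a finite path. -/
def diffL (σ : List (V × Fin k × V)) (a b : Fin k) : ℤ :=
  (σ.countP (fun e => decide (e.2.1 = a)) : ℤ) -
    (σ.countP (fun e => decide (e.2.1 = b)) : ℤ)

/-- Reachability along edges of the graph. -/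
def Reach (E : Finset (V × Fin k × V)) : V → V → Prop :=
  Relation.ReflTransGen fun u v => ∃ c : Fin k, (u, c, v) ∈ E

/-- A set of loops is connected if the nodes of any two of its loops are
mutually reachable in the graph. -/
def ConnectedLoops (E : Finset (V × Fin k × V))
    (𝓛 : Finset (List (V × Fin k × V))) : Prop :=
  ∀ σ ∈ 𝓛, ∀ σ' ∈ 𝓛, ∀ e ∈ σ, ∀ e' ∈ σ',
    Reach E (Prod.fst e) (Prod.fst e') ∧ Reach E (Prod.fst e') (Prod.fst e)

/-- The finite set of loops `𝓛` has a natural linear combination with ratio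
`L`: there are natural coefficients, not all zero, with
`Σ c σ • diff σ = (Σ c σ • |σ|) • L` entrywise. -/
def HasNLCRatio (𝓛 : Finset (List (V × Fin k × V)))
    (L : Fin k → Fin k → ℝ) : Prop :=
  ∃ c : List (V × Fin k × V) → ℕ, (∃ σ ∈ 𝓛, c σ ≠ 0) ∧
    ∀ a b : Fin k,
      (∑ σ ∈ 𝓛, (c σ : ℝ) * (diffL σ a b : ℝ)) =
        (∑ σ ∈ 𝓛, (c σ : ℝ) * (σ.length : ℝ)) * L a b

namespace CLP

/-- Walk from `u` to `v`. -/
def Wk {V : Type} {k : ℕ} (E : Finset (V × Fin k × V)) : V → List (V × Fin k × V) → V → Prop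
  | u, [], v => u = v
  | u, e :: l, v => e ∈ E ∧ e.1 = u ∧ Wk E e.2.2 l v

theorem Wk.append {V : Type} {k : ℕ} {E : Finset (V × Fin k × V)} {l l' : List (V × Fin k × V)} :
    ∀ {u v w : V}, Wk E u l v → Wk E v l' w → Wk E u (l ++ l') w := by
  induction l with
  | nil => intro u v w h h'; simp only [Wk] at h; subst h; simpa using h'
  | cons e l ih => intro u v w h h'; exact ⟨h.1, h.2.1, ih h.2.2 h'⟩

theorem Wk.rep {V : Type} {k : ℕ} {E : Finset (V × Fin k × V)} {l : List (V × Fin k × V)} {u : V}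
    (h : Wk E u l u) (n : ℕ) : Wk E u (List.replicate n l).flatten u := by
  induction n with
  | zero => simp [Wk]
  | succ n ih => rw [List.replicate_succ, List.flatten_cons]; exact h.append ih

theorem Wk.of_reach {V : Type} {k : ℕ} {E : Finset (V × Fin k × V)} {u v : V}
    (h : Reach E u v) : ∃ l, Wk E u l v := by
  unfold Reach at h
  induction h with
  | refl => exact ⟨[], rfl⟩
  | tail _ h ih =>
    obtain ⟨l, hl⟩ := ih
    obtain ⟨c, hc⟩ := h
    exact ⟨l ++ [_], hl.append (l' := [_]) ⟨hc, rfl, rfl⟩⟩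

theorem Wk.of_finPath {V : Type} {k : ℕ} {E : Finset (V × Fin k × V)}
    (l : List (V × Fin k × V)) : ∀ (e : V × Fin k × V),
    (∀ x ∈ e :: l, x ∈ E) → List.IsChain (fun e f => e.2.2 = f.1) (e :: l) →
    Wk E e.1 (e :: l) ((e :: l).getLast (by simp)).2.2 := by
  induction l with
  | nil => intro e h _; exact ⟨h e (by simp), rfl, rfl⟩
  | cons f l ih =>
    intro e h hc
    rw [List.isChain_cons_cons] at hc
    refine ⟨h e (by simp), rfl, ?_⟩
    rw [hc.1, List.getLast_cons (by simp)]
    exact ih f (fun x hx => h x (by simp_all)) hc.2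

theorem Wk.of_loop {V : Type} [DecidableEq V] {k : ℕ} {E : Finset (V × Fin k × V)}
    {l : List (V × Fin k × V)} (h : IsSimpleLoop E l) : ∃ e ∈ l, Wk E e.1 l e.1 := by
  obtain ⟨⟨h1, h2⟩, h3, h4, _⟩ := h
  cases l with
  | nil => simp at h3
  | cons e l =>
    refine ⟨e, by simp, ?_⟩
    have := Wk.of_finPath l e h1 h2
    rw [List.getLast?_eq_getLast_of_ne_nil (by simp)] at h4
    simp only [List.head?_cons, Option.map_some, Option.some.injEq] at h4
    rwa [← h4] at this

theorem Wk.get {V : Type} {k : ℕ} {E : Finset (V × Fin k × V)} {l : List (V × Fin k × V)} :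
    ∀ {u v : V}, Wk E u l v → ∀ i e f, l[i]? = some e → l[i+1]? = some f →
      e ∈ E ∧ e.2.2 = f.1 := by
  induction l with
  | nil => intro u v _ i e f h; simp at h
  | cons x l ih =>
    intro u v h i e f he hf
    cases i with
    | zero =>
      simp at he hf
      subst he
      refine ⟨h.1, ?_⟩
      have h2 := h.2.2
      cases l with
      | nil => simp at hf
      | cons y l => simp at hf; subst hf; exact h2.2.1.symm
    | succ i => exact ih h.2.2 i e f (by simpa using he) (by simpa using hf)

theorem blocks {V : Type} [DecidableEq V] {k : ℕ} (E : Finset (V × Fin k × V)) (v₀ : V)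
    (c : List (V × Fin k × V) → ℕ) (s : Finset (List (V × Fin k × V)))
    (hs : ∀ σ ∈ s, ∃ u, Wk E u σ u ∧ Reach E v₀ u ∧ Reach E u v₀) :
    ∃ (Q : List (V × Fin k × V)) (B : ℕ → List (V × Fin k × V)),
      (∀ m, Wk E v₀ (B m) v₀) ∧ ∀ (w : V × Fin k × V → ℝ) (m : ℕ),
        ((B m).map w).sum = (Q.map w).sum + (m + 1) * ∑ σ ∈ s, (c σ : ℝ) * (σ.map w).sum := by
  induction s using Finset.induction_on with
  | empty => exact ⟨[], fun _ => [], fun _ => rfl, by simp⟩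
  | insert σ s hσ ih =>
    obtain ⟨Q, B, hB, hQ⟩ := ih (fun τ hτ => hs τ (Finset.mem_insert_of_mem hτ))
    obtain ⟨u, hu, h1, h2⟩ := hs σ (Finset.mem_insert_self _ _)
    obtain ⟨p, hp⟩ := Wk.of_reach h1
    obtain ⟨q, hq⟩ := Wk.of_reach h2
    refine ⟨p ++ q ++ Q, fun m => p ++ (List.replicate ((m+1) * c σ) σ).flatten ++ q ++ B m,
      fun m => ((hp.append (hu.rep _)).append hq).append (hB m), fun w m => ?_⟩
    have : ∀ n : ℕ, (((List.replicate n σ).flatten).map w).sum = n * (σ.map w).sum := by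
      intro n
      induction n with
      | zero => simp
      | succ n ih =>
        rw [List.replicate_succ, List.flatten_cons, List.map_append, List.sum_append, ih]
        push_cast; ring
    simp only [List.map_append, List.sum_append, this, hQ, Finset.sum_insert hσ]
    push_cast; ring

/-- Concatenation of the first blocks. -/
def cat {α : Type} (B : ℕ → List α) : ℕ → List α
  | 0 => []
  | m + 1 => cat B m ++ B m

theorem cat_prefix {α : Type} (B : ℕ → List α) {m n : ℕ} (h : m ≤ n) : cat B m <+: cat B n := by
  induction n, h using Nat.le_induction with
  | base => exact List.prefix_rfl
  | succ n _ ih => exact ih.trans (List.prefix_append _ _)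

theorem cat_lim {α : Type} (B : ℕ → List α) (hl : ∀ m, m ≤ (cat B m).length) :
    ∃ p : ℕ → α, ∀ m i, i < (cat B m).length → (cat B m)[i]? = some (p i) := by
  refine ⟨fun i => (cat B (i+1))[i]'(hl (i+1)), fun m i hi => ?_⟩
  rw [← List.getElem?_eq_getElem]
  rcases le_total m (i+1) with h | h
  · obtain ⟨t, ht⟩ := cat_prefix B h
    rw [← ht, List.getElem?_append_left hi]
  · have h0 : i < (cat B (i+1)).length := hl (i+1)
    obtain ⟨t, ht⟩ := cat_prefix B h
    rw [← ht, List.getElem?_append_left h0]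

theorem sum_eq {α : Type} (p : ℕ → α) (l : List α) (h : ∀ i, i < l.length → l[i]? = some (p i))
    (w : α → ℝ) (n : ℕ) (hn : n ≤ l.length) :
    ∑ i ∈ Finset.range n, w (p i) = ((l.take n).map w).sum := by
  induction n with
  | zero => simp
  | succ n ih =>
    rw [Finset.sum_range_succ, ih (by omega), List.take_add_one, h n (by omega)]
    simp

theorem abs_sum_le {α : Type} (w : α → ℝ) (M : ℝ) (hw : ∀ x, |w x| ≤ M) (l : List α) :
    |(l.map w).sum| ≤ M * l.length := by
  induction l with
  | nil => simp
  | cons a l ih =>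
    simp only [List.map_cons, List.sum_cons, List.length_cons]
    push_cast
    have := abs_add_le (w a) (l.map w).sum
    linarith [hw a]

theorem cat_sum {α : Type} (B : ℕ → List α) (w : α → ℝ) (K : ℝ)
    (h : ∀ m, ((B m).map w).sum = K) (m : ℕ) : ((cat B m).map w).sum = m * K := by
  induction m with
  | zero => simp [cat]
  | succ m ih => simp only [cat, List.map_append, List.sum_append, ih, h]; push_cast; ring

theorem bound {α : Type} (B : ℕ → List α) (C N : ℕ) (hN : 1 ≤ N)
    (hB : ∀ m, (B m).length = C + (m + 1) * N) (p : ℕ → α)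
    (hp : ∀ m i, i < (cat B m).length → (cat B m)[i]? = some (p i))
    (w : α → ℝ) (M K : ℝ) (hw : ∀ x, |w x| ≤ M) (hM : 0 ≤ M)
    (hK : ∀ m, ((B m).map w).sum = K) :
    ∃ A : ℝ, ∀ n : ℕ, (∑ i ∈ Finset.range n, w (p i)) ^ 2 ≤ A * (4 * n + 2) := by
  have hlen : ∀ m, m * (m + 1) ≤ 2 * (cat B m).length := by
    intro m
    induction m with
    | zero => simp
    | succ m ih => simp only [cat, List.length_append, hB]; nlinarith
  refine ⟨(|K| + M * (C + N)) ^ 2, fun n => ?_⟩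
  have hex : ∃ m, n < (cat B (m+1)).length := ⟨n, by have := hlen (n+1); nlinarith⟩
  obtain ⟨m, hm, hmin⟩ : ∃ m, n < (cat B (m+1)).length ∧ (cat B m).length ≤ n := by
    refine ⟨Nat.find hex, Nat.find_spec hex, ?_⟩
    rcases hq : Nat.find hex with _ | q
    · simp [cat]
    · have := Nat.find_min hex (m := q) (by omega)
      omega
  rw [sum_eq p _ (hp (m+1)) w n hm.le]
  have e1 : (cat B (m+1)).take n = cat B m ++ (B m).take (n - (cat B m).length) := by
    simp only [cat]
    rw [List.take_append, List.take_of_length_le hmin]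
  rw [e1, List.map_append, List.sum_append, cat_sum B w K hK]
  have h1 := abs_sum_le w M hw ((B m).take (n - (cat B m).length))
  have h2 : (((B m).take (n - (cat B m).length)).length : ℝ) ≤ C + (m+1) * N := by
    have : ((B m).take (n - (cat B m).length)).length ≤ C + (m+1) * N := by
      rw [← hB]; exact List.length_take_le' _ _
    exact_mod_cast this
  have h3 := abs_add_le ((m:ℝ) * K) ((List.map w ((B m).take (n - (cat B m).length))).sum)
  rw [abs_mul, Nat.abs_cast] at h3
  have h4 : M * (((B m).take (n - (cat B m).length)).length : ℝ) ≤ M * ((m+1) * (C + N)) := by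
    apply mul_le_mul_of_nonneg_left _ hM
    have : (0:ℝ) ≤ m * C := by positivity
    nlinarith
  have h5 : |(m:ℝ) * K + (List.map w ((B m).take (n - (cat B m).length))).sum|
      ≤ (|K| + M * (C + N)) * (m + 1) := by
    nlinarith [abs_nonneg K]
  have h6 : ((m:ℝ) + 1)^2 ≤ 4 * n + 2 := by
    have : m * (m+1) ≤ 2 * n := (hlen m).trans (by omega)
    have : (m:ℝ) * (m+1) ≤ 2 * n := by exact_mod_cast this
    nlinarith [sq_nonneg ((m:ℝ) - 1)]
  rw [← sq_abs]
  calc _ ≤ ((|K| + M * (C + N)) * (m + 1))^2 := by gcongr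
    _ = (|K| + M * (C + N))^2 * ((m:ℝ) + 1)^2 := by ring
    _ ≤ _ := by gcongr

theorem tends (f : ℕ → ℝ) (A : ℝ) (h : ∀ n : ℕ, f n ^ 2 ≤ A * (4 * n + 2)) :
    Filter.Tendsto (fun n : ℕ => f n / n) Filter.atTop (nhds 0) := by
  have hA : 0 ≤ A := by have := h 0; simp at this; nlinarith [sq_nonneg (f 0)]
  have h1 : Filter.Tendsto (fun n : ℕ => (6 * A) / (n:ℝ)) Filter.atTop (nhds 0) :=
    tendsto_const_div_atTop_nhds_zero_nat _
  have h2 : Filter.Tendsto (fun n : ℕ => (f n / n)^2) Filter.atTop (nhds 0) := by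
    refine tendsto_of_tendsto_of_tendsto_of_le_of_le' tendsto_const_nhds h1
      (Filter.Eventually.of_forall fun n => sq_nonneg _) ?_
    filter_upwards [Filter.eventually_ge_atTop 1] with n hn
    have hn' : (1:ℝ) ≤ n := by exact_mod_cast hn
    rw [div_pow, div_le_div_iff₀ (by positivity) (by positivity)]
    have h3 : f n ^ 2 ≤ 6 * A * n := (h n).trans (by nlinarith)
    nlinarith
  have h3 := h2.sqrt
  simp only [Real.sqrt_sq_eq_abs, Real.sqrt_zero] at h3
  exact (tendsto_zero_iff_abs_tendsto_zero _).2 h3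

/-- Edge weight. -/
noncomputable def wt {V : Type} {k : ℕ} (a b : Fin k) (x : ℝ) (e : V × Fin k × V) : ℝ :=
  (if e.2.1 = a then 1 else 0) - (if e.2.1 = b then 1 else 0) - x

theorem wt_list {V : Type} [DecidableEq V] {k : ℕ} (a b : Fin k) (x : ℝ)
    (l : List (V × Fin k × V)) :
    (l.map (wt a b x)).sum = (diffL l a b : ℝ) - l.length * x := by
  induction l with
  | nil => simp [diffL]
  | cons e l ih =>
    simp only [List.map_cons, List.sum_cons, ih, diffL, wt, List.countP_cons, List.length_cons,
      decide_eq_true_eq]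
    push_cast
    ring

theorem wt_path {V : Type} [Fintype V] [DecidableEq V] {k : ℕ} (a b : Fin k) (x : ℝ)
    (p : ℕ → V × Fin k × V) (n : ℕ) :
    ∑ i ∈ Finset.range n, wt a b x (p i) = (diffP p a b n : ℝ) - n * x := by
  simp [wt, diffP, cntP, Finset.sum_sub_distrib]

theorem wt_abs {V : Type} {k : ℕ} (a b : Fin k) (x : ℝ) (e : V × Fin k × V) :
    |wt a b x e| ≤ 1 + |x| := by
  unfold wt
  refine (abs_sub _ _).trans ?_
  gcongr
  split_ifs <;> simp

end CLP

theorem connected_loops_with_nlc_gives_colorLimit_path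
    {V : Type} [Fintype V] [DecidableEq V] {k : ℕ} (hk : 1 ≤ k)
    (E : Finset (V × Fin k × V)) (L : Fin k → Fin k → ℝ)
    (𝓛 : Finset (List (V × Fin k × V))) (hne : 𝓛.Nonempty)
    (hloops : ∀ σ ∈ 𝓛, IsSimpleLoop E σ) (hconn : ConnectedLoops E 𝓛)
    (hnlc : HasNLCRatio 𝓛 L) :
    ∃ p : ℕ → V × Fin k × V, IsInfPath E p ∧ HasColorLimitP p L := by
  obtain ⟨c, ⟨σ₀, hσ₀, hc₀⟩, hc⟩ := hnlc
  obtain ⟨e₀, he₀, -⟩ := CLP.Wk.of_loop (hloops σ₀ hσ₀)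
  obtain ⟨Q, B, hB, hQ⟩ := CLP.blocks E e₀.1 c 𝓛 (fun σ hσ => by
    obtain ⟨e, he, hw⟩ := CLP.Wk.of_loop (hloops σ hσ)
    exact ⟨e.1, hw, hconn σ₀ hσ₀ σ hσ e₀ he₀ e he⟩)
  have hlenB : ∀ m, (B m).length = Q.length + (m + 1) * ∑ σ ∈ 𝓛, c σ * σ.length := by
    intro m
    have := hQ (fun _ => 1) m
    simp at this
    exact_mod_cast this
  have hN : 1 ≤ ∑ σ ∈ 𝓛, c σ * σ.length := by
    have h1 : c σ₀ * σ₀.length ≤ ∑ σ ∈ 𝓛, c σ * σ.length :=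
      Finset.single_le_sum (f := fun σ => c σ * σ.length) (fun _ _ => Nat.zero_le _) hσ₀
    have h2 : 0 < c σ₀ * σ₀.length :=
      Nat.mul_pos (Nat.pos_of_ne_zero hc₀) (List.length_pos_of_mem he₀)
    omega
  have hl : ∀ m, m ≤ (CLP.cat B m).length := by
    intro m
    induction m with
    | zero => simp
    | succ m ih => simp only [CLP.cat, List.length_append, hlenB]; nlinarith
  obtain ⟨p, hp⟩ := CLP.cat_lim B hl
  have hwk : ∀ m, CLP.Wk E e₀.1 (CLP.cat B m) e₀.1 := by
    intro m
    induction m with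
    | zero => exact rfl
    | succ m ih => exact ih.append (hB m)
  refine ⟨p, fun i => ?_, fun a b => ?_⟩
  · have := hl (i+2)
    exact (hwk (i+2)).get i _ _ (hp _ i (by omega)) (hp _ (i+1) (by omega))
  · obtain ⟨A, hA⟩ := CLP.bound B _ _ hN hlenB p hp (CLP.wt a b (L a b)) (1 + |L a b|)
      ((Q.map (CLP.wt a b (L a b))).sum) (CLP.wt_abs a b _) (by positivity) (fun m => by
        rw [hQ]
        have : ∑ σ ∈ 𝓛, (c σ : ℝ) * (σ.map (CLP.wt a b (L a b))).sum = 0 := by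
          simp only [CLP.wt_list, mul_sub, Finset.sum_sub_distrib, hc a b, Finset.sum_mul]
          simp [mul_assoc]
        rw [this]; simp)
    have h := (CLP.tends _ A hA).add_const (L a b)
    rw [zero_add] at h
    refine h.congr' ?_
    filter_upwards [Filter.eventually_ge_atTop 1] with n hn
    have hn' : (n:ℝ) ≠ 0 := by positivity
    rw [CLP.wt_path]
    field_simp
    ring
end

section
/- Consider a finite system of homogeneous linear constraints in variables x ∈ ℝ^m, where each constraint has one of the forms aᵀx = 0, aᵀx ≥ 0, or aᵀx > 0 with integer coefficient vector a ∈ ℤ^m. If the system has a real solution, then it has an integer solution, i.e., a solution x ∈ ℤ^m satisfying all constraints. -/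
theorem aux_pos_functional (V : Submodule ℚ ℝ) [Module.Finite ℚ V] {K : Type} [Finite K]
    (v : K → V) (hv : ∀ k, 0 < (v k : ℝ)) : ∃ f : V →ₗ[ℚ] ℚ, ∀ k, 0 < f (v k) := by
  let b := Module.finBasis ℚ V
  let U : Set (Fin (Module.finrank ℚ V) → ℝ) :=
    {y | ∀ k, 0 < ∑ s, ((b.repr (v k) s : ℚ) : ℝ) * y s}
  have hU : IsOpen U := by
    have : U = ⋂ k, {y | 0 < ∑ s, ((b.repr (v k) s : ℚ) : ℝ) * y s} := by
      ext y; simp [U]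
    rw [this]
    exact isOpen_iInter_of_finite fun k => isOpen_lt continuous_const (by fun_prop)
  have hne : U.Nonempty := by
    refine ⟨fun s => (b s : ℝ), fun k => ?_⟩
    have h1 := congrArg (fun w : V => (w : ℝ)) (b.sum_repr (v k))
    simp only [Submodule.coe_sum, Submodule.coe_smul, Rat.smul_def] at h1
    rw [h1]; exact hv k
  have hd : DenseRange (Pi.map (fun (_ : Fin (Module.finrank ℚ V)) (q : ℚ) => (q : ℝ))) :=
    DenseRange.piMap fun _ => Rat.denseRange_cast
  obtain ⟨q, hq⟩ := hd.exists_mem_open hU hne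
  refine ⟨b.constr ℚ q, fun k => ?_⟩
  have := hq k
  rw [Module.Basis.constr_apply_fintype]
  simp only [Pi.map_apply] at this
  simp only [Module.Basis.equivFun_apply, smul_eq_mul]
  exact_mod_cast this

theorem integer_solution_of_real_solution_homogeneous
    (m : ℕ) {I J L : Type} [Fintype I] [Fintype J] [Fintype L]
    (A : I → Fin m → ℤ) (B : J → Fin m → ℤ) (C : L → Fin m → ℤ)
    (h : ∃ x : Fin m → ℝ,
      (∀ i : I, ∑ t : Fin m, (A i t : ℝ) * x t = 0) ∧
      (∀ j : J, 0 ≤ ∑ t : Fin m, (B j t : ℝ) * x t) ∧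
      (∀ l : L, 0 < ∑ t : Fin m, (C l t : ℝ) * x t)) :
    ∃ x : Fin m → ℤ,
      (∀ i : I, ∑ t : Fin m, A i t * x t = 0) ∧
      (∀ j : J, 0 ≤ ∑ t : Fin m, B j t * x t) ∧
      (∀ l : L, 0 < ∑ t : Fin m, C l t * x t) := by
  obtain ⟨x, hA, hB, hC⟩ := h
  let V : Submodule ℚ ℝ := Submodule.span ℚ (Set.range x)
  haveI : Module.Finite ℚ V := Module.Finite.span_of_finite ℚ (Set.finite_range x)
  let w : Fin m → V := fun t => ⟨x t, Submodule.subset_span ⟨t, rfl⟩⟩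
  let E : (Fin m → ℤ) → V := fun a => ∑ t, (a t : ℚ) • w t
  have hE : ∀ a, (E a : ℝ) = ∑ t, (a t : ℝ) * x t := by
    intro a
    simp [E, w, Rat.smul_def]
  let P := {j : J // 0 < ∑ t : Fin m, (B j t : ℝ) * x t}
  obtain ⟨f, hf⟩ := aux_pos_functional V (K := P ⊕ L)
    (Sum.elim (fun p => E (B p.1)) (fun l => E (C l))) (by
      rintro (p | l)
      · simpa [hE] using p.2
      · simpa [hE] using hC l)
  let N : ℕ := ∏ t, (f (w t)).den
  have hN : 0 < N := Finset.prod_pos fun t _ => (f (w t)).den_pos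
  have hz : ∀ t, ∃ z : ℤ, (z : ℚ) = N * f (w t) := by
    intro t
    obtain ⟨c, hc⟩ : (f (w t)).den ∣ N := Finset.dvd_prod_of_mem _ (Finset.mem_univ t)
    refine ⟨c * (f (w t)).num, ?_⟩
    rw [hc]
    push_cast
    have := Rat.den_mul_eq_num (f (w t))
    rw [← this]; ring
  choose z hz using hz
  have key : ∀ a : Fin m → ℤ, ((∑ t, a t * z t : ℤ) : ℚ) = N * f (E a) := by
    intro a
    simp only [E, map_sum, map_smul, smul_eq_mul, Finset.mul_sum]
    push_cast
    refine Finset.sum_congr rfl fun t _ => ?_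
    rw [hz]; ring
  have hNq : (0 : ℚ) < N := by exact_mod_cast hN
  have zero : ∀ a : Fin m → ℤ, ∑ t, (a t : ℝ) * x t = 0 → ∑ t, a t * z t = 0 := by
    intro a ha
    have h0 : E a = 0 := Subtype.ext (by rw [hE, ha]; rfl)
    have := key a
    rw [h0, map_zero, mul_zero] at this
    exact_mod_cast this
  have pos : ∀ a : Fin m → ℤ, 0 < f (E a) → 0 < ∑ t, a t * z t := by
    intro a ha
    have h1 : (0 : ℚ) < ((∑ t, a t * z t : ℤ) : ℚ) := by
      rw [key]; exact mul_pos hNq ha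
    exact_mod_cast h1
  refine ⟨z, fun i => zero _ (hA i), fun j => ?_, fun l => pos _ (hf (Sum.inr l))⟩
  rcases (hB j).eq_or_lt with h0 | h0
  · exact (zero _ h0.symm).ge
  · exact (pos _ (hf (Sum.inl ⟨j, h0⟩))).le
end
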